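/- arXiv:2508.02224 — 6 statements merged into one kernel-verified Lean document; each statement's English description precedes it below -/
import Mathlib

section
/- Let (Π,c) be a semimetric space satisfying Hypothesis (C). Then there exist a metric d on Π and θ ∈ (0,1] such that d(x,y) ≤ c(x,y)^θ ≤ 2·d(x,y) for all x,y ∈ Π; consequently (Π,d) is a complete, separable, locally compact metric space, and a sequence converges in the metric d if and only if it c-converges (the topology induced by d coincides with the semimetric topology of c). -/
open MeasureTheory Filter Topology ENNReal

namespace PoC

variable {X : Type*}

/-- Convergence of a sequence with respect to the semimetric `c`
    (`x_n →c x` means `c (x_n, x) → 0`). -/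
def CConv (c : X → X → ℝ) (u : ℕ → X) (l : X) : Prop :=
  Filter.Tendsto (fun n => c (u n) l) Filter.atTop (nhds 0)

/-- `c` is a semimetric: nonnegative, vanishing exactly on the diagonal, symmetric. -/
structure IsSemimetric (c : X → X → ℝ) : Prop where
  nonneg : ∀ x y, 0 ≤ c x y
  eq_zero_iff : ∀ x y, c x y = 0 ↔ x = y
  symm : ∀ x y, c x y = c y x

/-- Hypothesis (C) for the semimetric space `(X, c)`, with relaxed triangle constant `B`:
(C1) completeness and separability, (C2) `B`-relaxed triangle inequality,
(C3) joint sequential continuity of `c`, (C4) (sequential) local compactness. -/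
structure HypC (c : X → X → ℝ) (B : ℝ) : Prop where
  semimetric : IsSemimetric c
  one_le : 1 ≤ B
  relaxed : ∀ x y z, c x y ≤ B * (c x z + c z y)
  complete : ∀ u : ℕ → X,
    (∀ ε > (0 : ℝ), ∃ N : ℕ, ∀ m ≥ N, ∀ n ≥ N, c (u m) (u n) < ε) → ∃ l, CConv c u l
  separable : ∃ D : Set X, D.Countable ∧ ∀ x : X, ∀ ε > (0 : ℝ), ∃ y ∈ D, c x y < ε
  contC : ∀ (u v : ℕ → X) (a b : X), CConv c u a → CConv c v b →
    Filter.Tendsto (fun n => c (u n) (v n)) Filter.atTop (nhds (c a b))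
  locallyCompact : ∀ x : X, ∃ r > (0 : ℝ), ∀ u : ℕ → X, (∀ n, c x (u n) ≤ r) →
    ∃ l : X, ∃ φ : ℕ → ℕ, StrictMono φ ∧ CConv c (u ∘ φ) l

end PoC

namespace PoC

/-!
If `c` satisfies a `B`-relaxed triangle inequality, then `c x w` is at most `K = 3 * B ^ 2` times
the largest of the three steps `c x y`, `c y z`, `c z w`. Choosing `θ` with `K ^ θ = 2` brings this
constant down to `2` for the power `c ^ θ`, and Frink's chain construction (the infimum of the
lengths of chains from `x` to `y`) then produces a metric `d` with `d ≤ c ^ θ ≤ 2 * d`. So `c` and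
`d` have the same convergent and the same Cauchy sequences, and small balls of one lie in small
balls of the other.
-/

section Metrization

variable {X : Type*} {c : X → X → ℝ} {B θ : ℝ}

theorem le_mul_max_of_relaxed_triangle (hc : ∀ x y, 0 ≤ c x y) (hB : 1 ≤ B)
    (hrelaxed : ∀ x y z, c x y ≤ B * (c x z + c z y)) (x y z w : X) :
    c x w ≤ 3 * B ^ 2 * max (c x y) (max (c y z) (c z w)) := by
  set M := max (c x y) (max (c y z) (c z w))
  have hxy : c x y ≤ M := le_max_left _ _
  have hyz : c y z ≤ M := (le_max_left _ _).trans (le_max_right _ _)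
  have hzw : c z w ≤ M := (le_max_right _ _).trans (le_max_right _ _)
  have hM : 0 ≤ M := (hc x y).trans hxy
  have hyw : c y w ≤ B * (M + M) := (hrelaxed y w z).trans (by gcongr)
  have hB_sq : B ≤ B ^ 2 := le_self_pow₀ hB two_ne_zero
  calc
    c x w ≤ B * (M + B * (M + M)) := (hrelaxed x w y).trans (by gcongr)
    _ = (B + 2 * B ^ 2) * M := by ring
    _ ≤ (B ^ 2 + 2 * B ^ 2) * M := by gcongr
    _ = 3 * B ^ 2 * M := by ring

theorem rpow_le_mul_max_of_le_mul_max (hc : ∀ x y, 0 ≤ c x y) {K : ℝ} (hK : 0 ≤ K)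
    (hθ : 0 ≤ θ) (hmax : ∀ x y z w, c x w ≤ K * max (c x y) (max (c y z) (c z w)))
    (x y z w : X) :
    c x w ^ θ ≤ K ^ θ * max (c x y ^ θ) (max (c y z ^ θ) (c z w ^ θ)) := by
  have hmono := Real.monotoneOn_rpow_Ici_of_exponent_nonneg hθ
  have hinner : 0 ≤ max (c y z) (c z w) := le_max_of_le_left (hc y z)
  calc
    c x w ^ θ ≤ (K * max (c x y) (max (c y z) (c z w))) ^ θ :=
      Real.rpow_le_rpow (hc x w) (hmax x y z w) hθ
    _ = K ^ θ * max (c x y ^ θ) (max (c y z ^ θ) (c z w ^ θ)) := by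
      rw [Real.mul_rpow hK (le_max_of_le_right hinner), hmono.map_max (hc x y) hinner,
        hmono.map_max (hc y z) (hc z w)]

theorem IsSemimetric.rpow (hc : IsSemimetric c) (hθ : 0 < θ) :
    IsSemimetric fun x y => c x y ^ θ where
  nonneg x y := Real.rpow_nonneg (hc.nonneg x y) θ
  eq_zero_iff x y := by rw [Real.rpow_eq_zero (hc.nonneg x y) hθ.ne', hc.eq_zero_iff]
  symm x y := by rw [hc.symm]

theorem IsSemimetric.exists_metric_of_le_two_mul_max (hc : IsSemimetric c)
    (hmax : ∀ x y z w, c x w ≤ 2 * max (c x y) (max (c y z) (c z w))) :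
    ∃ d : X → X → ℝ, IsSemimetric d ∧ (∀ x y z, d x z ≤ d x y + d y z) ∧
      ∀ x y, d x y ≤ c x y ∧ c x y ≤ 2 * d x y := by
  lift c to X → X → NNReal using hc.nonneg
  have hself (x : X) : c x x = 0 := by exact_mod_cast (hc.eq_zero_iff x x).2 rfl
  have hcomm (x y : X) : c x y = c y x := by exact_mod_cast hc.symm x y
  let := PseudoMetricSpace.ofPreNNDist c hself hcomm
  have hle (x y : X) : dist x y ≤ c x y :=
    PseudoMetricSpace.dist_ofPreNNDist_le c hself hcomm x y
  have hge (x y : X) : c x y ≤ 2 * dist x y :=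
    PseudoMetricSpace.le_two_mul_dist_ofPreNNDist c hself hcomm
      (fun x y z w => by exact_mod_cast hmax x y z w) x y
  have hzero (x y : X) : dist x y = 0 ↔ x = y := by
    refine ⟨fun h => (hc.eq_zero_iff x y).1 (le_antisymm ?_ (hc.nonneg x y)), ?_⟩
    · simpa only [h, mul_zero] using hge x y
    · rintro rfl
      exact dist_self x
  exact ⟨dist, ⟨fun _ _ => dist_nonneg, hzero, dist_comm⟩, dist_triangle,
    fun x y => ⟨hle x y, hge x y⟩⟩

theorem IsSemimetric.exists_metric_rpow_of_relaxed (hc : IsSemimetric c) (hB : 1 ≤ B)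
    (hrelaxed : ∀ x y z, c x y ≤ B * (c x z + c z y)) :
    ∃ (d : X → X → ℝ) (θ : ℝ), 0 < θ ∧ θ ≤ 1 ∧
      IsSemimetric d ∧ (∀ x y z, d x z ≤ d x y + d y z) ∧
      ∀ x y, d x y ≤ c x y ^ θ ∧ c x y ^ θ ≤ 2 * d x y := by
  set K := 3 * B ^ 2
  have hK : 2 ≤ K := by linarith [one_le_pow₀ hB (n := 2)]
  have hK_one : 1 < K := one_lt_two.trans_le hK
  have hK_pos : 0 < K := two_pos.trans_le hK
  have hθ : 0 < Real.logb K 2 := Real.logb_pos hK_one one_lt_two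
  have hθ_le : Real.logb K 2 ≤ 1 :=
    (Real.logb_le_iff_le_rpow hK_one two_pos).2 (by rwa [Real.rpow_one])
  have hKθ : K ^ Real.logb K 2 = 2 := Real.rpow_logb hK_pos hK_one.ne' two_pos
  have hmax := rpow_le_mul_max_of_le_mul_max hc.nonneg hK_pos.le hθ.le
    (le_mul_max_of_relaxed_triangle hc.nonneg hB hrelaxed)
  rw [hKθ] at hmax
  obtain ⟨d, hd⟩ := (hc.rpow hθ).exists_metric_of_le_two_mul_max hmax
  exact ⟨d, Real.logb K 2, hθ, hθ_le, hd⟩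

end Metrization

section UniformComparison

variable {X : Type*}

/-- `u` is a Cauchy sequence for the semimetric `c`. -/
def CCauchy (c : X → X → ℝ) (u : ℕ → X) : Prop :=
  ∀ ε > (0 : ℝ), ∃ N : ℕ, ∀ m ≥ N, ∀ n ≥ N, c (u m) (u n) < ε

/-- Sequential completeness of the semimetric `c`. -/
def CComplete (c : X → X → ℝ) : Prop :=
  ∀ u : ℕ → X, CCauchy c u → ∃ l, CConv c u l

/-- Separability of the semimetric `c`: a countable set meets every ball. -/
def CSeparable (c : X → X → ℝ) : Prop :=
  ∃ D : Set X, D.Countable ∧ ∀ x : X, ∀ ε > (0 : ℝ), ∃ y ∈ D, c x y < ε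

/-- Local compactness of the semimetric `c`, encoded sequentially: around every point some closed
ball is relatively sequentially compact. -/
def CLocallyCompact (c : X → X → ℝ) : Prop :=
  ∀ x : X, ∃ r > (0 : ℝ), ∀ u : ℕ → X, (∀ n, c x (u n) ≤ r) →
    ∃ l : X, ∃ φ : ℕ → ℕ, StrictMono φ ∧ CConv c (u ∘ φ) l

/-- `c` is uniformly finer than `d`: the identity map from `(X, c)` to `(X, d)` is uniformly
continuous. -/
def UniformlyFiner (c d : X → X → ℝ) : Prop :=
  ∀ ε > (0 : ℝ), ∃ δ > (0 : ℝ), ∀ x y, c x y < δ → d x y < ε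

variable {c d : X → X → ℝ}

theorem UniformlyFiner.of_le_comp {f : ℝ → ℝ} (hc : ∀ x y, 0 ≤ c x y) (hf : ContinuousAt f 0)
    (hf_zero : f 0 = 0) (hle : ∀ x y, d x y ≤ f (c x y)) : UniformlyFiner c d := by
  intro ε hε
  obtain ⟨δ, hδ, hfδ⟩ := Metric.eventually_nhds_iff.1
    (hf.eventually_lt_const (hf_zero.trans_lt hε))
  refine ⟨δ, hδ, fun x y hxy => (hle x y).trans_lt (hfδ ?_)⟩
  rwa [Real.dist_0_eq_abs, abs_of_nonneg (hc x y)]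

theorem UniformlyFiner.cConv (h : UniformlyFiner c d) (hd : ∀ x y, 0 ≤ d x y)
    {u : ℕ → X} {l : X} (hu : CConv c u l) : CConv d u l := by
  refine tendsto_order.2 ⟨fun a ha => .of_forall fun n => ha.trans_le (hd _ _), fun ε hε => ?_⟩
  obtain ⟨δ, hδ, hcd⟩ := h ε hε
  exact (hu.eventually_lt_const hδ).mono fun n => hcd (u n) l

theorem UniformlyFiner.cCauchy (h : UniformlyFiner c d) {u : ℕ → X} (hu : CCauchy c u) :
    CCauchy d u := by
  intro ε hε
  obtain ⟨δ, hδ, hcd⟩ := h ε hε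
  obtain ⟨N, hN⟩ := hu δ hδ
  exact ⟨N, fun m hm n hn => hcd _ _ (hN m hm n hn)⟩

theorem UniformlyFiner.cComplete (hcd : UniformlyFiner c d) (hdc : UniformlyFiner d c)
    (hd : ∀ x y, 0 ≤ d x y) (hcomplete : CComplete c) : CComplete d := fun u hu =>
  (hcomplete u (hdc.cCauchy hu)).imp fun _ => hcd.cConv hd

theorem UniformlyFiner.cSeparable (h : UniformlyFiner c d) (hseparable : CSeparable c) :
    CSeparable d := by
  obtain ⟨D, hD, hdense⟩ := hseparable
  refine ⟨D, hD, fun x ε hε => ?_⟩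
  obtain ⟨δ, hδ, hcd⟩ := h ε hε
  exact (hdense x δ hδ).imp fun y ⟨hy, hxy⟩ => ⟨hy, hcd x y hxy⟩

theorem UniformlyFiner.cLocallyCompact (hcd : UniformlyFiner c d) (hdc : UniformlyFiner d c)
    (hd : ∀ x y, 0 ≤ d x y) (hcompact : CLocallyCompact c) : CLocallyCompact d := by
  intro x
  obtain ⟨r, hr, hball⟩ := hcompact x
  obtain ⟨δ, hδ, hδr⟩ := hdc r hr
  refine ⟨δ / 2, half_pos hδ, fun u hu => ?_⟩
  obtain ⟨l, φ, hφ, hl⟩ := hball u fun n => (hδr _ _ ((hu n).trans_lt (half_lt_self hδ))).le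
  exact ⟨l, φ, hφ, hcd.cConv hd hl⟩

theorem UniformlyFiner.of_le_rpow {θ : ℝ} (hc : ∀ x y, 0 ≤ c x y) (hθ : 0 < θ)
    (hle : ∀ x y, d x y ≤ c x y ^ θ) : UniformlyFiner c d :=
  .of_le_comp hc (Real.continuousAt_rpow_const 0 θ (.inr hθ.le)) (Real.zero_rpow hθ.ne') hle

theorem UniformlyFiner.of_rpow_le_mul {θ C : ℝ} (hc : ∀ x y, 0 ≤ c x y) (hd : ∀ x y, 0 ≤ d x y)
    (hθ : 0 < θ) (hle : ∀ x y, d x y ^ θ ≤ C * c x y) : UniformlyFiner c d := by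
  have hθ_inv : 0 < θ⁻¹ := inv_pos.2 hθ
  refine .of_le_comp (f := fun t => (C * t) ^ θ⁻¹) hc ?_ ?_ fun x y => ?_
  · exact (continuousAt_const.mul continuousAt_id).rpow_const (.inr hθ_inv.le)
  · simp only [mul_zero, Real.zero_rpow hθ_inv.ne']
  · have hpow : 0 ≤ d x y ^ θ := Real.rpow_nonneg (hd x y) θ
    exact (Real.le_rpow_inv_iff_of_pos (hd x y) (hpow.trans (hle x y)) hθ).2 (hle x y)

end UniformComparison

theorem statement0_general {X : Type*} {c : X → X → ℝ} {B : ℝ} (hc : IsSemimetric c)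
    (hB : 1 ≤ B) (hrelaxed : ∀ x y z, c x y ≤ B * (c x z + c z y)) :
    ∃ (d : X → X → ℝ) (θ : ℝ), 0 < θ ∧ θ ≤ 1 ∧
      IsSemimetric d ∧ (∀ x y z : X, d x z ≤ d x y + d y z) ∧
      (∀ x y : X, d x y ≤ c x y ^ θ ∧ c x y ^ θ ≤ 2 * d x y) ∧
      (CComplete d ↔ CComplete c) ∧ (CSeparable d ↔ CSeparable c) ∧
      (CLocallyCompact d ↔ CLocallyCompact c) ∧
      ∀ (u : ℕ → X) (l : X), CConv d u l ↔ CConv c u l := by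
  obtain ⟨d, θ, hθ, hθ_le, hd, htriangle, hsandwich⟩ :=
    hc.exists_metric_rpow_of_relaxed hB hrelaxed
  have hcd : UniformlyFiner c d := .of_le_rpow hc.nonneg hθ fun x y => (hsandwich x y).1
  have hdc : UniformlyFiner d c :=
    .of_rpow_le_mul hd.nonneg hc.nonneg hθ fun x y => (hsandwich x y).2
  exact ⟨d, θ, hθ, hθ_le, hd, htriangle, hsandwich,
    ⟨hdc.cComplete hcd hc.nonneg, hcd.cComplete hdc hd.nonneg⟩,
    ⟨hdc.cSeparable, hcd.cSeparable⟩,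
    ⟨hdc.cLocallyCompact hcd hc.nonneg, hcd.cLocallyCompact hdc hd.nonneg⟩,
    fun _ _ => ⟨hdc.cConv hc.nonneg, hcd.cConv hd.nonneg⟩⟩

/-- If `(X, c)` satisfies Hypothesis (C), then there are a metric `d` on `X`
and `θ ∈ (0,1]` with `d(x,y) ≤ c(x,y)^θ ≤ 2 d(x,y)`; consequently `(X, d)` is a complete,
separable, locally compact metric space and `d`-convergence coincides with `c`-convergence. -/
theorem statement0 {X : Type*} {c : X → X → ℝ} {B : ℝ} (hC : HypC c B) :
    ∃ (d : X → X → ℝ) (θ : ℝ), 0 < θ ∧ θ ≤ 1 ∧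
      -- `d` is a metric:
      IsSemimetric d ∧ (∀ x y z : X, d x z ≤ d x y + d y z) ∧
      -- the sandwich `d ≤ c^θ ≤ 2 d`:
      (∀ x y : X, d x y ≤ (c x y) ^ θ ∧ (c x y) ^ θ ≤ 2 * d x y) ∧
      -- `(X, d)` is complete:
      (∀ u : ℕ → X, (∀ ε > (0 : ℝ), ∃ N : ℕ, ∀ m ≥ N, ∀ n ≥ N, d (u m) (u n) < ε) →
        ∃ l : X, Filter.Tendsto (fun n => d (u n) l) Filter.atTop (nhds 0)) ∧
      -- `(X, d)` is separable:
      (∃ D : Set X, D.Countable ∧ ∀ x : X, ∀ ε > (0 : ℝ), ∃ y ∈ D, d x y < ε) ∧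
      -- `(X, d)` is locally compact:
      (∀ x : X, ∃ r > (0 : ℝ), ∀ u : ℕ → X, (∀ n, d x (u n) ≤ r) →
        ∃ l : X, ∃ φ : ℕ → ℕ, StrictMono φ ∧
          Filter.Tendsto (fun n => d (u (φ n)) l) Filter.atTop (nhds 0)) ∧
      -- the topologies coincide: a sequence `d`-converges iff it `c`-converges:
      (∀ (u : ℕ → X) (l : X),
        Filter.Tendsto (fun n => d (u n) l) Filter.atTop (nhds 0) ↔ CConv c u l) := by
  obtain ⟨d, θ, hθ, hθ_le, hd, htriangle, hsandwich, hcomplete, hseparable, hcompact, hconv⟩ :=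
    statement0_general hC.semimetric hC.one_le hC.relaxed
  exact ⟨d, θ, hθ, hθ_le, hd, htriangle, hsandwich, hcomplete.2 hC.complete,
    hseparable.2 hC.separable, hcompact.2 hC.locallyCompact, hconv⟩

end PoC
end

section
/- Let (Π,c) be a semimetric space satisfying Hypothesis (C), let K and L be Markov kernels on Π, let μ, ν be Borel probability measures on Π, and let γ ∈ Γ(μ,ν) be any coupling of μ and ν. Then C_c(μK, νL) ≤ ∫_{Π×Π} C_c(δ_x K, δ_y L) dγ(x,y), where δ_x K = K(x) denotes the measure assigned by the kernel K to the point x. -/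
open MeasureTheory Filter Topology ENNReal

namespace PoC

variable {X : Type*} [MeasurableSpace X]

/-- `γ` is a coupling of the probability measures `μ` and `ν`. -/
def IsCoupling (μ ν : Measure X) (γ : Measure (X × X)) : Prop :=
  IsProbabilityMeasure γ ∧ γ.map Prod.fst = μ ∧ γ.map Prod.snd = ν

/-- The `c`-optimal transport cost `C_c(μ,ν)`, valued in `ℝ≥0∞`. -/
noncomputable def cost (c : X → X → ℝ) (μ ν : Measure X) : ℝ≥0∞ :=
  ⨅ (γ : Measure (X × X)) (_ : IsCoupling μ ν γ), ∫⁻ p, ENNReal.ofReal (c p.1 p.2) ∂γ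

/-- `μ ∈ P_c(X)`: a Borel probability measure with finite `c`-moment. -/
def MemPc (c : X → X → ℝ) (μ : Measure X) : Prop :=
  IsProbabilityMeasure μ ∧ ∀ z : X, (∫⁻ x, ENNReal.ofReal (c z x) ∂μ) < ⊤

/-- Sequential continuity of a real function w.r.t. the semimetric `c`. -/
def SeqContinuous (c : X → X → ℝ) (φ : X → ℝ) : Prop :=
  ∀ (u : ℕ → X) (l : X), CConv c u l →
    Filter.Tendsto (fun n => φ (u n)) Filter.atTop (nhds (φ l))

/-- `φ ∈ C_{b,c}(X)`: continuous functions with growth controlled by `c`. -/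
def IsCbc (c : X → X → ℝ) (φ : X → ℝ) : Prop :=
  SeqContinuous c φ ∧
    ∃ M₀ M₁ : ℝ, 0 ≤ M₀ ∧ 0 ≤ M₁ ∧ ∃ z : X, ∀ x, |φ x| ≤ M₀ + M₁ * c z x

/-- Weak convergence of probability measures: convergence of integrals against all
bounded (`c`-sequentially) continuous functions. -/
def WeakConv (c : X → X → ℝ) (μs : ℕ → Measure X) (μ : Measure X) : Prop :=
  ∀ φ : X → ℝ, SeqContinuous c φ → (∃ M : ℝ, ∀ x, |φ x| ≤ M) →
    Filter.Tendsto (fun n => ∫ x, φ x ∂(μs n)) Filter.atTop (nhds (∫ x, φ x ∂μ))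

end PoC

namespace PoC

variable {X : Type*} [MeasurableSpace X]

/-- A (weakly continuous) Markov kernel on `X`. -/
def IsMarkovKernelW (c : X → X → ℝ) (K : X → Measure X) : Prop :=
  Measurable K ∧ (∀ x, IsProbabilityMeasure (K x)) ∧
  ∀ (u : ℕ → X) (l : X), CConv c u l → ∀ φ : X → ℝ, SeqContinuous c φ →
    (∃ M : ℝ, ∀ x, |φ x| ≤ M) →
    Filter.Tendsto (fun n => ∫ y, φ y ∂(K (u n))) Filter.atTop (nhds (∫ y, φ y ∂(K l)))

end PoC

namespace PoC

/-!
Near-optimal couplings of `K ω` and `L ω` can only be chosen pointwise: nothing makes the choice,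
the optimal cost, or even `c` measurable. First, the choice is made absolutely continuous with
respect to `K ω ⊗ L ω`: on each of countably many rectangles where `c` is almost constant, a
coupling may be replaced by the product of its marginals there without changing its marginals and
almost without changing its cost. Second, the chosen couplings are averaged against a finitely
additive extension of `γ` to all bounded functions, which Riesz extension provides. The average is
a genuine measure, because the modulus of absolute continuity, although chosen arbitrarily, agrees
on a set of full outer measure with a measurable function, which is enough for dominated
convergence.
-/

open scoped NNReal

section FullOuterMeasure

variable {Ω : Type*} [MeasurableSpace Ω] {γ : Measure Ω} {S T : Set Ω}

/-- The possibly nonmeasurable set `S` has full outer measure: its complement has inner measure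
zero. -/
def HasFullOuterMeasure (γ : Measure Ω) (S : Set Ω) : Prop :=
  ∀ A, MeasurableSet A → S ⊆ A → γ Aᶜ = 0

namespace HasFullOuterMeasure

lemma mono (hS : HasFullOuterMeasure γ S) (hST : S ⊆ T) : HasFullOuterMeasure γ T :=
  fun A hA hTA => hS A hA (hST.trans hTA)

lemma ae_of_forall_mem (hS : HasFullOuterMeasure γ S) {p : Ω → Prop}
    (hp : MeasurableSet {ω | p ω}) (h : ∀ ω ∈ S, p ω) : ∀ᵐ ω ∂γ, p ω :=
  hS _ hp h

lemma lintegral_mono (hS : HasFullOuterMeasure γ S) {f g : Ω → ℝ≥0∞} (hg : Measurable g)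
    (hfg : ∀ ω ∈ S, f ω ≤ g ω) : ∫⁻ ω, f ω ∂γ ≤ ∫⁻ ω, g ω ∂γ := by
  obtain ⟨f', hf', hf'f, hint⟩ := exists_measurable_le_lintegral_eq γ f
  rw [hint]
  exact lintegral_mono_ae <| hS.ae_of_forall_mem (measurableSet_le hf' hg) fun ω hω =>
    (hf'f ω).trans (hfg ω hω)

lemma restrict (hS : HasFullOuterMeasure γ S) {D : Set Ω} (hD : MeasurableSet D) :
    HasFullOuterMeasure (γ.restrict D) (S ∩ D) := by
  intro A hA hSDA
  rw [Measure.restrict_apply hA.compl]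
  have hSA : S ⊆ A ∪ Dᶜ := fun ω hω => (em (ω ∈ D)).imp (fun h => hSDA ⟨hω, h⟩) id
  simpa only [Set.compl_union, compl_compl] using hS _ (hA.union hD.compl) hSA

variable {Y : Type*} [MeasurableSpace Y]

lemma map_of_mapsTo (hS : HasFullOuterMeasure γ S) {φ : Ω → Y} (hφ : Measurable φ) {U : Set Y}
    (hSU : Set.MapsTo φ S U) : HasFullOuterMeasure (γ.map φ) U := by
  intro A hA hUA
  rw [Measure.map_apply hφ hA.compl]
  exact hS _ (hφ hA) fun ω hω => hUA (hSU hω)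

lemma prod {κ : Measure Ω} {η : Measure Y} [SFinite η] {U : Set Ω} {V : Set Y}
    (hU : HasFullOuterMeasure κ U) (hV : HasFullOuterMeasure η V) :
    HasFullOuterMeasure (κ.prod η) (U ×ˢ V) := by
  intro A hA hUVA
  rw [Measure.measure_prod_null hA.compl]
  refine hU.ae_of_forall_mem
    (measurable_measure_prodMk_left hA.compl (measurableSet_singleton 0)) fun x hx => ?_
  exact hV (Prod.mk x ⁻¹' A) (measurable_prodMk_left hA) fun y hy => hUVA ⟨hx, hy⟩

lemma exists_measurable_eq [SFinite γ] (hS : HasFullOuterMeasure γ S) (N : Ω → ℕ) :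
    ∃ n : Ω → ℕ, Measurable n ∧ HasFullOuterMeasure γ (S ∩ {ω | N ω = n ω}) := by
  classical
  let level : ℕ → Set Ω := fun k => S ∩ {ω | N ω = k}
  let hull : ℕ → Set Ω := fun k => toMeasurable γ (level k)
  have hhull k : MeasurableSet (hull k) := measurableSet_toMeasurable _ _
  have hcover : MeasurableSet (⋃ k, hull k) := .iUnion hhull
  have hex ω : ∃ k, ω ∈ hull k ∨ ω ∈ (⋃ i, hull i)ᶜ := by
    by_cases h : ω ∈ ⋃ i, hull i
    · exact (Set.mem_iUnion.1 h).imp fun k hk => Or.inl hk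
    · exact ⟨0, Or.inr h⟩
  let n : Ω → ℕ := fun ω => Nat.find (hex ω)
  have hn : Measurable n := measurable_find hex fun k => (hhull k).union hcover.compl
  refine ⟨n, hn, fun A hA hsub => ?_⟩
  have huncovered : γ (⋃ i, hull i)ᶜ = 0 := hS _ hcover fun ω hω =>
    Set.mem_iUnion.2 ⟨N ω, subset_toMeasurable γ (level (N ω)) ⟨hω, rfl⟩⟩
  -- A measurable set meets a hull in the same measure as it meets the original level set.
  have hpiece k : γ (hull k ∩ (Aᶜ ∩ n ⁻¹' {k})) = 0 := by
    rw [Measure.measure_toMeasurable_inter_of_sFinite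
      (hA.compl.inter (hn (measurableSet_singleton k)))]
    convert measure_empty (μ := γ)
    refine Set.eq_empty_of_forall_notMem ?_
    rintro ω ⟨⟨hωS, hωN⟩, hωA, hωn⟩
    exact hωA (hsub ⟨hωS, hωN.trans (Set.mem_singleton_iff.1 hωn).symm⟩)
  refine measure_mono_null (t := (⋃ i, hull i)ᶜ ∪ ⋃ k, hull k ∩ (Aᶜ ∩ n ⁻¹' {k})) ?_
    (measure_union_null huncovered (measure_iUnion_null hpiece))
  intro ω hω
  rcases Nat.find_spec (hex ω) with h | h
  · exact Or.inr (Set.mem_iUnion.2 ⟨n ω, h, hω, rfl⟩)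
  · exact Or.inl h

lemma exists_filter_eventuallyEq_measurable [SFinite γ] (hS : HasFullOuterMeasure γ S)
    (N : ℕ → Ω → ℕ) :
    ∃ F : Filter Ω, S ∈ F ∧ (∀ T ∈ F, HasFullOuterMeasure γ T) ∧
      ∀ j, ∃ n : Ω → ℕ, Measurable n ∧ N j =ᶠ[F] n := by
  choose n hn hnfull using fun (j : ℕ) (T : {T : Set Ω // HasFullOuterMeasure γ T}) =>
    T.2.exists_measurable_eq (N j)
  let T : ℕ → {T : Set Ω // HasFullOuterMeasure γ T} := fun j =>
    Nat.rec ⟨S, hS⟩ (fun j T => ⟨_, hnfull j T⟩) j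
  have hanti : Antitone fun j => (T j).1 :=
    antitone_nat_of_succ_le fun j => Set.inter_subset_left
  have hbasis : (⨅ j, 𝓟 (T j).1).HasBasis (fun _ => True) fun j => (T j).1 :=
    hasBasis_iInf_principal hanti.directed_ge
  refine ⟨⨅ j, 𝓟 (T j).1, hbasis.mem_of_mem (i := 0) trivial, fun U hU => ?_,
    fun j => ⟨n j (T j), hn j (T j), ?_⟩⟩
  · obtain ⟨j, -, hj⟩ := hbasis.mem_iff.1 hU
    exact (T j).2.mono hj
  · exact hbasis.eventually_iff.2 ⟨j + 1, trivial, fun ω hω => hω.2⟩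

end HasFullOuterMeasure

lemma exists_measurable_hasFullOuterMeasure_le_add {f : Ω → ℝ≥0∞} (hf : ∫⁻ ω, f ω ∂γ ≠ ⊤)
    {ε : ℝ≥0∞} (hε : ε ≠ 0) :
    ∃ g : Ω → ℝ≥0∞, Measurable g ∧ ∫⁻ ω, g ω ∂γ = ∫⁻ ω, f ω ∂γ ∧
      HasFullOuterMeasure γ {ω | f ω ≤ g ω + ε} := by
  obtain ⟨g, hg, hgf, hgint⟩ := exists_measurable_le_lintegral_eq γ f
  refine ⟨g, hg, hgint.symm, fun A hA hsub => ?_⟩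
  -- Off `A` the minorant `g` could be raised by `ε`, so maximality forces `γ Aᶜ = 0`.
  have hle : ∫⁻ ω, g ω ∂γ + ε * γ Aᶜ ≤ ∫⁻ ω, g ω ∂γ + 0 := by
    rw [← lintegral_indicator_const hA.compl, ← lintegral_add_left hg, add_zero, ← hgint]
    refine MeasureTheory.lintegral_mono fun ω => ?_
    by_cases h : ω ∈ A
    · simpa [h] using hgf ω
    · simpa [h] using (not_le.1 fun h' => h (hsub h')).le
  have hzero := (ENNReal.add_le_add_iff_left (hgint ▸ hf)).1 hle
  simpa [hε] using hzero

end FullOuterMeasure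

section Mean

variable {Ω : Type*}

/-- The space of all bounded real functions, measurable or not, on which a finitely additive mean
acts. -/
def boundedFunctions (Ω : Type*) : Submodule ℝ (Ω → ℝ) where
  carrier := {φ | ∃ C, ∀ ω, |φ ω| ≤ C}
  add_mem' := fun ⟨C, hC⟩ ⟨D, hD⟩ =>
    ⟨C + D, fun ω => (abs_add_le _ _).trans (add_le_add (hC ω) (hD ω))⟩
  zero_mem' := ⟨0, by simp⟩
  smul_mem' := fun a φ ⟨C, hC⟩ => ⟨|a| * C, fun ω => by
    rw [Pi.smul_apply, smul_eq_mul, abs_mul]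
    exact mul_le_mul_of_nonneg_left (hC ω) (abs_nonneg a)⟩

lemma mem_boundedFunctions_of_mem_Icc {φ : Ω → ℝ} {C : ℝ} (hφ : ∀ ω, φ ω ∈ Set.Icc 0 C) :
    φ ∈ boundedFunctions Ω :=
  ⟨C, fun ω => (abs_of_nonneg (hφ ω).1).trans_le (hφ ω).2⟩

variable [MeasurableSpace Ω] {γ : Measure Ω} {F : Filter Ω} {ℓ : (Ω → ℝ) →ₗ[ℝ] ℝ}

/-- `ℓ` is a finitely additive extension of `γ` to all bounded functions, carried by every member
of the filter `F`. It is defined on all functions so as to avoid a subtype, but its values on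
unbounded ones are meaningless. -/
structure IsMean (γ : Measure Ω) (F : Filter Ω) (ℓ : (Ω → ℝ) →ₗ[ℝ] ℝ) : Prop where
  nonneg : ∀ φ ∈ boundedFunctions Ω, 0 ≤ᶠ[F] φ → 0 ≤ ℓ φ
  eq_integral : ∀ g ∈ boundedFunctions Ω, Measurable g → ℓ g = ∫ ω, g ω ∂γ

lemma integrable_of_mem_boundedFunctions [IsFiniteMeasure γ] {g : Ω → ℝ}
    (hg : g ∈ boundedFunctions Ω) (hgm : Measurable g) : Integrable g γ :=
  let ⟨C, hC⟩ := hg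
  .of_bound hgm.aestronglyMeasurable C (ae_of_all _ hC)

lemma exists_isMean [IsFiniteMeasure γ] (hF : ∀ S ∈ F, HasFullOuterMeasure γ S) :
    ∃ ℓ, IsMean γ F ℓ := by
  let measurableFunctions : Submodule ℝ (boundedFunctions Ω) :=
    { carrier := {φ | Measurable φ.1}
      add_mem' := fun hφ hψ => hφ.add hψ
      zero_mem' := measurable_const
      smul_mem' := fun a _ hφ => hφ.const_smul a }
  have hint (g : measurableFunctions) : Integrable g.1.1 γ :=
    integrable_of_mem_boundedFunctions g.1.2 g.2
  let integral : boundedFunctions Ω →ₗ.[ℝ] ℝ :=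
    { domain := measurableFunctions
      toFun :=
        { toFun := fun g => ∫ ω, g.1.1 ω ∂γ
          map_add' := fun g h => integral_add (hint g) (hint h)
          map_smul' := fun a g => integral_const_mul a g.1.1 } }
  let cone : PointedCone ℝ (boundedFunctions Ω) :=
    { carrier := {φ | 0 ≤ᶠ[F] φ.1}
      add_mem' := fun hφ hψ => by
        filter_upwards [hφ, hψ] with ω hφω hψω using add_nonneg hφω hψω
      zero_mem' := .rfl
      smul_mem' := fun a φ hφ => by
        filter_upwards [hφ] with ω hφω using mul_nonneg a.2 hφω }
  have hnonneg (g : integral.domain) (hg : (g : boundedFunctions Ω) ∈ cone) : 0 ≤ integral g :=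
    integral_nonneg_of_ae <|
      (hF _ hg).ae_of_forall_mem (measurableSet_le measurable_const g.2) fun _ => id
  have hdense (φ : boundedFunctions Ω) :
      ∃ g : integral.domain, (g : boundedFunctions Ω) + φ ∈ cone :=
    let ⟨C, hC⟩ := φ.2
    ⟨⟨⟨fun _ => C, |C|, fun _ => le_rfl⟩, measurable_const⟩,
      .of_forall fun ω => neg_le_iff_add_nonneg'.1 (neg_le_of_abs_le (hC ω))⟩
  obtain ⟨ℓ, hℓint, hℓnonneg⟩ := riesz_extension cone integral hnonneg hdense
  obtain ⟨L, hL⟩ := ℓ.exists_extend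
  have hLℓ (φ : boundedFunctions Ω) : L φ.1 = ℓ φ := LinearMap.congr_fun hL φ
  exact ⟨L, fun φ hφ h => (hℓnonneg ⟨φ, hφ⟩ h).trans_eq (hLℓ ⟨φ, hφ⟩).symm,
    fun g hg hgm => (hLℓ ⟨g, hg⟩).trans (hℓint ⟨⟨g, hg⟩, hgm⟩)⟩

namespace IsMean

lemma le_integral (hℓ : IsMean γ F ℓ) {φ g : Ω → ℝ} (hφ : φ ∈ boundedFunctions Ω)
    (hg : g ∈ boundedFunctions Ω) (hgm : Measurable g) (hφg : φ ≤ᶠ[F] g) :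
    ℓ φ ≤ ∫ ω, g ω ∂γ := by
  have hdiff : 0 ≤ ℓ (g - φ) := hℓ.nonneg _ (sub_mem hg hφ) <| by
    filter_upwards [hφg] with ω hω using sub_nonneg.2 hω
  rw [map_sub, hℓ.eq_integral g hg hgm] at hdiff
  exact sub_nonneg.1 hdiff

/-- Finitely additive means violate dominated convergence in general; measurable majorants restore
it. -/
lemma tendsto_zero [IsProbabilityMeasure γ] (hℓ : IsMean γ F ℓ) {φ : ℕ → Ω → ℝ} {C : ℝ}
    (hφ : ∀ i ω, φ i ω ∈ Set.Icc 0 C)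
    (hmaj : ∀ ε > 0, ∃ G : ℕ → Ω → ℝ, (∀ i, Measurable (G i)) ∧ (∀ i ω, 0 ≤ G i ω) ∧
      (∀ ω, Tendsto (fun i => G i ω) atTop (𝓝 0)) ∧ ∀ i, ∀ᶠ ω in F, φ i ω ≤ ε + G i ω) :
    Tendsto (fun i => ℓ (φ i)) atTop (𝓝 0) := by
  have hC : 0 ≤ C := by
    obtain ⟨ω⟩ := nonempty_of_isProbabilityMeasure γ
    exact (hφ 0 ω).1.trans (hφ 0 ω).2
  have hφbdd i : φ i ∈ boundedFunctions Ω := mem_boundedFunctions_of_mem_Icc (hφ i)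
  refine tendsto_order.2 ⟨fun a ha => .of_forall fun i => ha.trans_le <|
    hℓ.nonneg _ (hφbdd i) (.of_forall fun ω => (hφ i ω).1), fun a ha => ?_⟩
  obtain ⟨G, hGm, hG, hGlim, hφG⟩ := hmaj (a / 2) (half_pos ha)
  let H : ℕ → Ω → ℝ := fun i ω => min C (a / 2 + G i ω)
  have hHm i : Measurable (H i) := measurable_const.min (measurable_const.add (hGm i))
  have hH i ω : H i ω ∈ Set.Icc 0 C :=
    ⟨le_min hC (add_nonneg (half_pos ha).le (hG i ω)), min_le_left _ _⟩
  have hle i : ℓ (φ i) ≤ ∫ ω, H i ω ∂γ :=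
    hℓ.le_integral (hφbdd i) (mem_boundedFunctions_of_mem_Icc (hH i)) (hHm i) <| by
      filter_upwards [hφG i] with ω hω using le_min (hφ i ω).2 hω
  have hlim : Tendsto (fun i => ∫ ω, H i ω ∂γ) atTop (𝓝 (∫ _, min C (a / 2) ∂γ)) := by
    refine tendsto_integral_of_dominated_convergence (fun _ => C)
      (fun i => (hHm i).aestronglyMeasurable) (integrable_const C)
      (fun i => ae_of_all _ fun ω => ?_) (ae_of_all _ fun ω => ?_)
    · exact (Real.norm_of_nonneg (hH i ω).1).trans_le (hH i ω).2
    · simpa only [add_zero] using tendsto_const_nhds.min ((hGlim ω).const_add (a / 2))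
  have hlt : ∫ _, min C (a / 2) ∂γ < a := by
    rw [integral_const, probReal_univ, one_smul]
    exact (min_le_right _ _).trans_lt (half_lt_self ha)
  filter_upwards [hlim.eventually_lt_const hlt] with i hi using (hle i).trans_lt hi

end IsMean

end Mean

section Averaging

open ProbabilityTheory

variable {Y : Type*} [MeasurableSpace Y]

lemma exists_measure_of_additive {v : Set Y → ℝ} (hnonneg : ∀ E, 0 ≤ v E) (hempty : v ∅ = 0)
    (hunion : ∀ s t, MeasurableSet s → MeasurableSet t → Disjoint s t → v (s ∪ t) = v s + v t)
    (hcont : ∀ s : ℕ → Set Y, (∀ n, MeasurableSet (s n)) → Antitone s → ⋂ n, s n = ∅ →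
      Tendsto (fun n => v (s n)) atTop (𝓝 0)) :
    ∃ ρ : Measure Y, ∀ E, MeasurableSet E → ρ E = ENNReal.ofReal (v E) := by
  have hring : IsSetRing {s : Set Y | MeasurableSet s} :=
    ⟨.empty, fun _ _ => .union, fun _ _ => .diff⟩
  let m : AddContent ℝ≥0∞ {s : Set Y | MeasurableSet s} :=
    hring.addContent_of_union (fun E => ENNReal.ofReal (v E)) (by simp [hempty])
      fun {s t} hs ht hst => by
        simp only [hunion s t hs ht hst, ENNReal.ofReal_add (hnonneg s) (hnonneg t)]
  refine ⟨Measure.ofMeasurable (fun E _ => m E) addContent_empty fun f hf hd => ?_,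
    fun E hE => Measure.ofMeasurable_apply E hE⟩
  refine addContent_iUnion_eq_sum_of_tendsto_zero hring m (fun _ _ => ENNReal.ofReal_ne_top)
    (fun s hs hanti hinter => ?_) hf (MeasurableSet.iUnion hf) hd
  have hlim := (ENNReal.continuous_ofReal.tendsto 0).comp (hcont s hs hanti hinter)
  rw [ENNReal.ofReal_zero] at hlim
  exact hlim

lemma exists_nat_measureReal_le_add_mul {P Q : Measure Y} [IsFiniteMeasure P] [IsFiniteMeasure Q]
    (hPQ : P ≪ Q) {ε : ℝ} (hε : 0 < ε) :
    ∃ N : ℕ, ∀ E, P.real E ≤ ε + N * Q.real E := by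
  have hfin : ∫⁻ y, P.rnDeriv Q y ∂Q ≠ ⊤ := by
    rw [Measure.lintegral_rnDeriv hPQ]
    exact measure_ne_top _ _
  obtain ⟨δ, hδ, hsmall⟩ := exists_pos_setLIntegral_lt_of_measure_lt hfin
    (ENNReal.ofReal_pos.2 hε).ne'
  obtain ⟨N, hN⟩ := ENNReal.exists_nat_mul_gt hδ.ne' (measure_ne_top P Set.univ)
  refine ⟨N, fun E => ?_⟩
  have hbound : P E ≤ ENNReal.ofReal ε + N * Q E := by
    rcases lt_or_ge (Q E) δ with hE | hE
    · refine le_add_right ?_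
      simpa only [Measure.setLIntegral_rnDeriv hPQ] using (hsmall E hE).le
    · calc P E ≤ N * δ := (measure_mono (Set.subset_univ E)).trans hN.le
        _ ≤ N * Q E := by gcongr
        _ ≤ _ := le_add_self
  have hreal := ENNReal.toReal_mono (by finiteness) hbound
  rwa [ENNReal.toReal_add (by finiteness) (by finiteness), ENNReal.toReal_ofReal hε.le,
    ENNReal.toReal_mul, ENNReal.toReal_natCast] at hreal

lemma lintegral_simpleFunc_eq_sum (s : SimpleFunc Y ℝ≥0) (P : Measure Y) :
    ∫⁻ y, s y ∂P = ∑ x ∈ s.range, (x : ℝ≥0∞) * P (s ⁻¹' {x}) := by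
  rw [← SimpleFunc.map_lintegral, ← SimpleFunc.lintegral_eq_lintegral]
  rfl

lemma toReal_lintegral_simpleFunc (s : SimpleFunc Y ℝ≥0) (P : Measure Y) [IsFiniteMeasure P] :
    (∫⁻ y, s y ∂P).toReal = ∑ x ∈ s.range, (x : ℝ) * P.real (s ⁻¹' {x}) := by
  rw [lintegral_simpleFunc_eq_sum, ENNReal.toReal_sum fun x _ => by finiteness]
  simp only [ENNReal.toReal_mul, ENNReal.coe_toReal, Measure.real]

lemma measureReal_mem_boundedFunctions {Ω : Type*} (P : Ω → Measure Y)
    [∀ ω, IsProbabilityMeasure (P ω)] (E : Set Y) :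
    (fun ω => (P ω).real E) ∈ boundedFunctions Ω :=
  mem_boundedFunctions_of_mem_Icc fun _ => ⟨measureReal_nonneg, measureReal_le_one⟩

variable {Ω : Type*} [MeasurableSpace Ω] {γ : Measure Ω} {F : Filter Ω}
  {ℓ : (Ω → ℝ) →ₗ[ℝ] ℝ} {P : Ω → Measure Y} {ρ : Measure Y} {S : Set Ω}

/-- `ρ` is an average with respect to `γ` of the family `P`, which need not depend measurably on
its parameter: a measurable bound for integrals against `P ω`, `ω ∈ S`, integrates to a bound for
the integral against `ρ`. -/
def IsAverage (γ : Measure Ω) (S : Set Ω) (P : Ω → Measure Y) (ρ : Measure Y) : Prop :=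
  ∀ (f : Y → ℝ≥0∞) (g : Ω → ℝ≥0∞), Measurable g → (∀ ω ∈ S, ∫⁻ y, f y ∂(P ω) ≤ g ω) →
    ∫⁻ y, f y ∂ρ ≤ ∫⁻ ω, g ω ∂γ

lemma IsAverage.map_eq_bind {Z : Type*} [MeasurableSpace Z] [IsProbabilityMeasure γ]
    [IsProbabilityMeasure ρ] (hρ : IsAverage γ S P ρ) {K : Ω → Measure Z} (hK : Measurable K)
    [∀ ω, IsProbabilityMeasure (K ω)] {π : Y → Z} (hπ : Measurable π)
    (hPK : ∀ ω ∈ S, (P ω).map π = K ω) : ρ.map π = γ.bind K := by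
  have : IsProbabilityMeasure (ρ.map π) := Measure.isProbabilityMeasure_map hπ.aemeasurable
  have : IsProbabilityMeasure (γ.bind K) :=
    isProbabilityMeasure_bind hK.aemeasurable (ae_of_all _ inferInstance)
  refine Measure.eq_of_le_of_isProbabilityMeasure (Measure.le_iff.2 fun A hA => ?_)
  rw [Measure.map_apply hπ hA, Measure.bind_apply hA hK.aemeasurable,
    ← lintegral_indicator_one (hπ hA)]
  refine hρ _ _ (Measure.measurable_measure.1 hK A hA) fun ω hω => ?_
  rw [lintegral_indicator_one (hπ hA), ← Measure.map_apply hπ hA, hPK ω hω]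

variable [∀ ω, IsProbabilityMeasure (P ω)]

namespace IsMean

lemma nonneg_measureReal (hℓ : IsMean γ F ℓ) (E : Set Y) : 0 ≤ ℓ fun ω => (P ω).real E :=
  hℓ.nonneg _ (measureReal_mem_boundedFunctions P E) (.of_forall fun _ => measureReal_nonneg)

lemma exists_measure [IsProbabilityMeasure γ] (hℓ : IsMean γ F ℓ) {Q : Kernel Ω Y}
    [IsFiniteKernel Q]
    (hPQ : ∀ ε > 0, ∃ n : Ω → ℕ, Measurable n ∧
      ∀ᶠ ω in F, ∀ E, (P ω).real E ≤ ε + n ω * (Q ω).real E) :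
    ∃ ρ : Measure Y, ∀ E, MeasurableSet E → ρ E = ENNReal.ofReal (ℓ fun ω => (P ω).real E) := by
  refine exists_measure_of_additive (fun E => hℓ.nonneg_measureReal E) ?_ (fun s t _ ht hst => ?_)
    fun s hs hanti hinter => hℓ.tendsto_zero (C := 1)
      (fun i ω => ⟨measureReal_nonneg, measureReal_le_one⟩) fun ε hε => ?_
  · simp only [measureReal_empty]
    exact map_zero ℓ
  · rw [← map_add]
    exact congrArg ℓ (funext fun ω => measureReal_union hst ht)
  · obtain ⟨n, hn, hle⟩ := hPQ ε hε
    refine ⟨fun i ω => n ω * (Q ω).real (s i), fun i => ?_, fun i ω => by positivity,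
      fun ω => ?_, fun i => hle.mono fun ω h => h (s i)⟩
    · exact (measurable_from_nat.comp hn).mul (Q.measurable_coe (hs i)).ennreal_toReal
    · have hlim := tendsto_measure_iInter_atTop (μ := Q ω)
        (fun i => (hs i).nullMeasurableSet) hanti ⟨0, measure_ne_top _ _⟩
      rw [hinter, measure_empty] at hlim
      simpa [Measure.real, Function.comp_def] using
        ((ENNReal.tendsto_toReal ENNReal.zero_ne_top).comp hlim).const_mul (n ω : ℝ)

lemma lintegral_simpleFunc (hℓ : IsMean γ F ℓ)
    (hρ : ∀ E, MeasurableSet E → ρ E = ENNReal.ofReal (ℓ fun ω => (P ω).real E))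
    (s : SimpleFunc Y ℝ≥0) :
    ∫⁻ y, s y ∂ρ = ENNReal.ofReal (ℓ fun ω => (∫⁻ y, s y ∂(P ω)).toReal) := by
  have hsum : (fun ω => (∫⁻ y, s y ∂(P ω)).toReal) =
      ∑ x ∈ s.range, (x : ℝ) • fun ω => (P ω).real (s ⁻¹' {x}) := by
    funext ω
    simp [toReal_lintegral_simpleFunc]
  rw [hsum, lintegral_simpleFunc_eq_sum, map_sum, ENNReal.ofReal_sum_of_nonneg]
  · refine Finset.sum_congr rfl fun x _ => ?_
    rw [map_smul, smul_eq_mul, ENNReal.ofReal_mul x.coe_nonneg, ENNReal.ofReal_coe_nnreal,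
      hρ _ (s.measurableSet_fiber x)]
  · intro x _
    rw [map_smul]
    exact mul_nonneg x.coe_nonneg (hℓ.nonneg_measureReal _)

lemma ofReal_toReal_le_lintegral [IsFiniteMeasure γ] (hℓ : IsMean γ F ℓ) {φ : Ω → ℝ≥0∞} {C : ℝ≥0}
    (hφ : ∀ ω, φ ω ≤ C) {g : Ω → ℝ≥0∞} (hg : Measurable g) (hφg : ∀ᶠ ω in F, φ ω ≤ g ω) :
    ENNReal.ofReal (ℓ fun ω => (φ ω).toReal) ≤ ∫⁻ ω, g ω ∂γ := by
  let h : Ω → ℝ≥0∞ := fun ω => min (g ω) C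
  have hh : Measurable h := hg.min measurable_const
  have hhtop ω : h ω ≠ ⊤ := ne_top_of_le_ne_top ENNReal.coe_ne_top (min_le_right _ _)
  have hbdd {ψ : Ω → ℝ≥0∞} (hψ : ∀ ω, ψ ω ≤ C) : (fun ω => (ψ ω).toReal) ∈ boundedFunctions Ω :=
    mem_boundedFunctions_of_mem_Icc fun ω =>
      ⟨ENNReal.toReal_nonneg, ENNReal.toReal_mono ENNReal.coe_ne_top (hψ ω)⟩
  have hhbdd := hbdd (ψ := h) fun ω => min_le_right _ _
  have hle : ℓ (fun ω => (φ ω).toReal) ≤ ∫ ω, (h ω).toReal ∂γ := by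
    refine hℓ.le_integral (hbdd hφ) hhbdd hh.ennreal_toReal ?_
    filter_upwards [hφg] with ω hω using ENNReal.toReal_mono (hhtop ω) (le_min hω (hφ ω))
  calc ENNReal.ofReal (ℓ fun ω => (φ ω).toReal)
      ≤ ENNReal.ofReal (∫ ω, (h ω).toReal ∂γ) := ENNReal.ofReal_le_ofReal hle
    _ = ∫⁻ ω, ENNReal.ofReal (h ω).toReal ∂γ :=
        ofReal_integral_eq_lintegral_ofReal
          (integrable_of_mem_boundedFunctions hhbdd hh.ennreal_toReal)
          (ae_of_all _ fun _ => ENNReal.toReal_nonneg)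
    _ ≤ ∫⁻ ω, g ω ∂γ := lintegral_mono fun ω => ENNReal.ofReal_toReal_le.trans (min_le_left _ _)

lemma isAverage [IsFiniteMeasure γ] (hℓ : IsMean γ F ℓ) (hS : S ∈ F)
    (hρ : ∀ E, MeasurableSet E → ρ E = ENNReal.ofReal (ℓ fun ω => (P ω).real E)) :
    IsAverage γ S P ρ := by
  intro f g hg hfg
  rw [lintegral_eq_nnreal]
  refine iSup₂_le fun s hs => ?_
  obtain ⟨C, hC⟩ := s.exists_forall_le
  have hsC ω : ∫⁻ y, s y ∂(P ω) ≤ C := by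
    calc ∫⁻ y, s y ∂(P ω) ≤ ∫⁻ _, C ∂(P ω) := lintegral_mono fun y => ENNReal.coe_le_coe.2 (hC y)
      _ = C := by rw [lintegral_const, measure_univ, mul_one]
  calc (s.map ((↑) : ℝ≥0 → ℝ≥0∞)).lintegral ρ
      = ∫⁻ y, s y ∂ρ := (SimpleFunc.lintegral_eq_lintegral _ ρ).symm
    _ = ENNReal.ofReal (ℓ fun ω => (∫⁻ y, s y ∂(P ω)).toReal) := hℓ.lintegral_simpleFunc hρ s
    _ ≤ ∫⁻ ω, g ω ∂γ := hℓ.ofReal_toReal_le_lintegral hsC hg <| by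
        filter_upwards [hS] with ω hω using (lintegral_mono hs).trans (hfg ω hω)

end IsMean

lemma exists_isAverage [IsProbabilityMeasure γ] (Q : Kernel Ω Y)
    [IsFiniteKernel Q] (hPQ : ∀ ω, P ω ≪ Q ω) (hS : HasFullOuterMeasure γ S) :
    ∃ ρ : Measure Y, IsProbabilityMeasure ρ ∧ IsAverage γ S P ρ := by
  choose N hN using fun (j : ℕ) (ω : Ω) =>
    exists_nat_measureReal_le_add_mul (hPQ ω) (Nat.one_div_pos_of_nat (α := ℝ) (n := j))
  obtain ⟨F, hSF, hF, hNF⟩ := hS.exists_filter_eventuallyEq_measurable N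
  obtain ⟨ℓ, hℓ⟩ := exists_isMean hF
  obtain ⟨ρ, hρ⟩ := hℓ.exists_measure (P := P) (Q := Q) fun ε hε => by
    obtain ⟨j, hj⟩ := exists_nat_one_div_lt hε
    obtain ⟨n, hn, hNn⟩ := hNF j
    refine ⟨n, hn, hNn.mono fun ω hω E => ?_⟩
    rw [← hω]
    exact (hN j ω E).trans (by gcongr)
  refine ⟨ρ, ⟨?_⟩, hℓ.isAverage hSF hρ⟩
  have hone : ℓ (fun ω => (P ω).real Set.univ) = 1 := by
    rw [hℓ.eq_integral _ (measureReal_mem_boundedFunctions P _)] <;> simp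
  rw [hρ _ .univ, hone, ENNReal.ofReal_one]

end Averaging

section RectangularApproximation

/-- `f` is almost constant on each of countably many rectangles covering the product, the
oscillation being as small as desired. For a semimetric this replaces measurability with respect to
the product `σ`-algebra. -/
def IsRectangularlyApproximable {X Y : Type*} (f : X × Y → ℝ≥0∞) : Prop :=
  ∀ ε : ℝ≥0, 0 < ε → ∃ (U : ℕ → Set X) (V : ℕ → Set Y), (∀ p, ∃ k, p ∈ U k ×ˢ V k) ∧
    ∀ k, ∀ p ∈ U k ×ˢ V k, ∀ q ∈ U k ×ˢ V k, f p ≤ f q + ε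

lemma IsRectangularlyApproximable.of_countable {X Y : Type*} {f : X × Y → ℝ≥0∞}
    (h : ∀ ε : ℝ≥0, 0 < ε → ∃ 𝓡 : Set (Set X × Set Y), 𝓡.Countable ∧
      (∀ p, ∃ R ∈ 𝓡, p ∈ R.1 ×ˢ R.2) ∧
      ∀ R ∈ 𝓡, ∀ p ∈ R.1 ×ˢ R.2, ∀ q ∈ R.1 ×ˢ R.2, f p ≤ f q + ε) :
    IsRectangularlyApproximable f := by
  intro ε hε
  obtain ⟨𝓡, h𝓡, hcover, hosc⟩ := h ε hε
  obtain ⟨R, hR⟩ := (h𝓡.insert (∅, ∅)).exists_eq_range (Set.insert_nonempty _ _)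
  refine ⟨fun k => (R k).1, fun k => (R k).2, fun p => ?_, fun k p hp q hq => ?_⟩
  · obtain ⟨S, hS, hpS⟩ := hcover p
    obtain ⟨k, rfl⟩ := hR.subset (Set.mem_insert_of_mem _ hS)
    exact ⟨k, hpS⟩
  · rcases hR.superset ⟨k, rfl⟩ with hempty | hk
    · simp [hempty] at hp
    · exact hosc _ hk p hp q hq

namespace HypC

variable {M : Type*} {c : M → M → ℝ} {B : ℝ}

lemma exists_abs_sub_lt (hC : HypC c B) (x y : M) {ε : ℝ} (hε : 0 < ε) :
    ∃ δ > 0, ∀ u v, c u x < δ → c v y < δ → |c u v - c x y| < ε := by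
  by_contra! h
  choose u v hu hv hfar using fun n : ℕ => h (1 / (n + 1)) Nat.one_div_pos_of_nat
  have hlim {w : ℕ → M} {z : M} (hw : ∀ n, c (w n) z < 1 / (n + 1)) : CConv c w z :=
    squeeze_zero (fun n => hC.semimetric.nonneg _ _) (fun n => (hw n).le)
      tendsto_one_div_add_atTop_nhds_zero_nat
  obtain ⟨n, hn⟩ :=
    (Metric.tendsto_nhds.1 (hC.contC u v x y (hlim hu) (hlim hv)) ε hε).exists
  exact (hfar n).not_gt hn

lemma lt_of_lt_div_two_mul (hC : HypC c B) {x d z : M} {δ : ℝ} (hx : c x d < δ / (2 * B))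
    (hz : c z d < δ / (2 * B)) : c x z < δ := by
  have hB : 0 < B := zero_lt_one.trans_le hC.one_le
  calc c x z ≤ B * (c x d + c d z) := hC.relaxed x z d
    _ = B * (c x d + c z d) := by rw [hC.semimetric.symm d z]
    _ < B * (δ / (2 * B) + δ / (2 * B)) := by gcongr
    _ = δ := by field_simp; ring

lemma exists_nat_forall_le_add (hC : HypC c B) (p : M × M) {ε : ℝ} (hε : 0 < ε) :
    ∃ m : ℕ, ∀ d e, c p.1 d < 1 / (m + 1) → c p.2 e < 1 / (m + 1) →
      ∀ q ∈ {x | c x d < 1 / (m + 1)} ×ˢ {y | c y e < 1 / (m + 1)},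
      ∀ r ∈ {x | c x d < 1 / (m + 1)} ×ˢ {y | c y e < 1 / (m + 1)},
        c q.1 q.2 ≤ c r.1 r.2 + ε := by
  have hB : 0 < B := zero_lt_one.trans_le hC.one_le
  obtain ⟨δ, hδ, hosc⟩ := hC.exists_abs_sub_lt p.1 p.2 (half_pos hε)
  obtain ⟨m, hm⟩ := exists_nat_one_div_lt (show 0 < δ / (2 * B) by positivity)
  refine ⟨m, fun d e hpd hpe q hq r hr => ?_⟩
  have hnear {s : M × M} (hs : s ∈ {x | c x d < 1 / (m + 1)} ×ˢ {y | c y e < 1 / (m + 1)}) :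
      |c s.1 s.2 - c p.1 p.2| < ε / 2 :=
    hosc _ _ (hC.lt_of_lt_div_two_mul (hs.1.trans hm) (hpd.trans hm))
      (hC.lt_of_lt_div_two_mul (hs.2.trans hm) (hpe.trans hm))
  linarith [(abs_lt.1 (hnear hq)).2, (abs_lt.1 (hnear hr)).1]

lemma isRectangularlyApproximable (hC : HypC c B) :
    IsRectangularlyApproximable fun p : M × M => ENNReal.ofReal (c p.1 p.2) := by
  refine .of_countable fun ε hε => ?_
  obtain ⟨D, hD, hdense⟩ := hC.separable
  let rectangle (t : M × M × ℕ) : Set M × Set M :=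
    ({x | c x t.1 < 1 / (t.2.2 + 1)}, {y | c y t.2.1 < 1 / (t.2.2 + 1)})
  have hrectangles : (rectangle '' D ×ˢ D ×ˢ Set.univ).Countable :=
    (hD.prod (hD.prod Set.countable_univ)).image _
  refine ⟨_, hrectangles.mono (Set.sep_subset _ fun R =>
    ∀ p ∈ R.1 ×ˢ R.2, ∀ q ∈ R.1 ×ˢ R.2, c p.1 p.2 ≤ c q.1 q.2 + ε), fun p => ?_,
    fun R hR p hp q hq => ?_⟩
  · obtain ⟨m, hm⟩ := hC.exists_nat_forall_le_add p (NNReal.coe_pos.2 hε)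
    obtain ⟨d, hd, hpd⟩ := hdense p.1 (1 / (m + 1)) Nat.one_div_pos_of_nat
    obtain ⟨e, he, hpe⟩ := hdense p.2 (1 / (m + 1)) Nat.one_div_pos_of_nat
    exact ⟨_, ⟨⟨(d, e, m), ⟨hd, he, trivial⟩, rfl⟩, hm d e hpd hpe⟩, hpd, hpe⟩
  · calc ENNReal.ofReal (c p.1 p.2) ≤ ENNReal.ofReal (c q.1 q.2 + ε) :=
          ENNReal.ofReal_le_ofReal (hR.2 p hp q hq)
      _ = ENNReal.ofReal (c q.1 q.2) + ε := by
          rw [ENNReal.ofReal_add (hC.semimetric.nonneg _ _) ε.coe_nonneg, ENNReal.ofReal_coe_nnreal]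

end HypC

end RectangularApproximation

section Decoupling

variable {X Y : Type*} [MeasurableSpace X] [MeasurableSpace Y]

/-- The product of the marginals of a finite measure `σ`, normalised so that it has the same
marginals as `σ`. -/
noncomputable def decouple (σ : Measure (X × Y)) : Measure (X × Y) :=
  (σ Set.univ)⁻¹ • σ.fst.prod σ.snd

variable {σ π : Measure (X × Y)} {f g : X × Y → ℝ≥0∞} {ε : ℝ≥0}

lemma decouple_absolutelyContinuous (σ : Measure (X × Y)) : decouple σ ≪ σ.fst.prod σ.snd :=
  Measure.AbsolutelyContinuous.rfl.smul_left _

lemma fst_decouple (σ : Measure (X × Y)) [IsFiniteMeasure σ] : (decouple σ).fst = σ.fst := by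
  rcases eq_or_ne σ 0 with rfl | hσ
  · simp [decouple]
  · rw [decouple, Measure.fst, Measure.map_smul, Measure.map_fst_prod, Measure.snd_univ, smul_smul,
      ENNReal.inv_mul_cancel (by simpa) (by finiteness), one_smul]

lemma snd_decouple (σ : Measure (X × Y)) [IsFiniteMeasure σ] : (decouple σ).snd = σ.snd := by
  rcases eq_or_ne σ 0 with rfl | hσ
  · simp [decouple]
  · rw [decouple, Measure.snd, Measure.map_smul, Measure.map_snd_prod, Measure.fst_univ, smul_smul,
      ENNReal.inv_mul_cancel (by simpa) (by finiteness), one_smul]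

lemma HasFullOuterMeasure.decouple_prod [IsFiniteMeasure σ] {S : Set (X × Y)}
    {U : Set X} {V : Set Y} (hS : HasFullOuterMeasure σ S) (hSUV : S ⊆ U ×ˢ V) :
    HasFullOuterMeasure (decouple σ) (U ×ˢ V) := by
  have hfst : HasFullOuterMeasure σ.fst U := hS.map_of_mapsTo measurable_fst fun p hp => (hSUV hp).1
  have hsnd : HasFullOuterMeasure σ.snd V := hS.map_of_mapsTo measurable_snd fun p hp => (hSUV hp).2
  exact fun A hA hUVA => decouple_absolutelyContinuous σ (hfst.prod hsnd A hA hUVA)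

lemma lintegral_decouple_le [IsFiniteMeasure σ] {U : Set X} {V : Set Y}
    (hosc : ∀ p ∈ U ×ˢ V, ∀ q ∈ U ×ˢ V, f p ≤ f q + ε) (hg : Measurable g)
    (hS : HasFullOuterMeasure σ {q ∈ U ×ˢ V | f q ≤ g q + ε}) :
    ∫⁻ p, f p ∂(decouple σ) ≤ ∫⁻ q, (g q + 2 * ε) ∂σ := by
  let r : ℝ≥0∞ := ⨆ p ∈ U ×ˢ V, f p
  have hupper : ∀ p ∈ U ×ˢ V, f p ≤ r := fun p hp => le_iSup₂ (f := fun p _ => f p) p hp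
  have hlower : ∀ q ∈ {q ∈ U ×ˢ V | f q ≤ g q + ε}, r ≤ g q + 2 * ε := fun q ⟨hq, hfg⟩ =>
    iSup₂_le fun p hp => calc
      f p ≤ f q + ε := hosc p hp q hq
      _ ≤ g q + ε + ε := by gcongr
      _ = g q + 2 * ε := by rw [add_assoc, two_mul]
  have hmass : decouple σ Set.univ = σ Set.univ := by
    rw [← Measure.fst_univ, fst_decouple, Measure.fst_univ]
  calc ∫⁻ p, f p ∂(decouple σ) ≤ ∫⁻ _, r ∂(decouple σ) :=
        (hS.decouple_prod (Set.sep_subset _ _)).lintegral_mono measurable_const hupper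
    _ = ∫⁻ _, r ∂σ := by rw [lintegral_const, lintegral_const, hmass]
    _ ≤ ∫⁻ q, (g q + 2 * ε) ∂σ := hS.lintegral_mono (hg.add_const _) hlower

/-- The sum of the decouplings of `π` on the level sets of `n`. -/
noncomputable def decoupleAlong (n : X × Y → ℕ) (π : Measure (X × Y)) : Measure (X × Y) :=
  Measure.sum fun k => decouple (π.restrict (n ⁻¹' {k}))

lemma sum_restrict_fiber {Ω ι : Type*} [MeasurableSpace Ω] [MeasurableSpace ι] [Countable ι]
    [MeasurableSingletonClass ι] {n : Ω → ι} (hn : Measurable n) (γ : Measure Ω) :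
    Measure.sum (fun k => γ.restrict (n ⁻¹' {k})) = γ := by
  rw [← Measure.restrict_iUnion (pairwise_disjoint_fiber n)
    fun k => hn (measurableSet_singleton k), ← Set.preimage_iUnion, Set.iUnion_of_singleton,
    Set.preimage_univ, Measure.restrict_univ]

variable [IsFiniteMeasure π] {n : X × Y → ℕ}

lemma fst_decoupleAlong (hn : Measurable n) : (decoupleAlong n π).fst = π.fst := by
  rw [decoupleAlong, Measure.fst_sum]
  simp only [fst_decouple]
  rw [← Measure.fst_sum, sum_restrict_fiber hn]

lemma snd_decoupleAlong (hn : Measurable n) : (decoupleAlong n π).snd = π.snd := by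
  rw [decoupleAlong, Measure.snd_sum]
  simp only [snd_decouple]
  rw [← Measure.snd_sum, sum_restrict_fiber hn]

lemma decoupleAlong_absolutelyContinuous (n : X × Y → ℕ) (π : Measure (X × Y))
    [IsFiniteMeasure π] : decoupleAlong n π ≪ π.fst.prod π.snd :=
  Measure.absolutelyContinuous_sum_left fun _ => (decouple_absolutelyContinuous _).trans <|
    (Measure.fst_mono Measure.restrict_le_self).absolutelyContinuous.prod
      (Measure.snd_mono Measure.restrict_le_self).absolutelyContinuous

lemma exists_absolutelyContinuous_lintegral_le_add (hf : IsRectangularlyApproximable f)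
    (hfin : ∫⁻ p, f p ∂π ≠ ⊤) (hε : 0 < ε) :
    ∃ π' : Measure (X × Y), π'.fst = π.fst ∧ π'.snd = π.snd ∧ π' ≪ π.fst.prod π.snd ∧
      ∫⁻ p, f p ∂π' ≤ ∫⁻ p, f p ∂π + 2 * ε * π Set.univ := by
  obtain ⟨U, V, hcover, hosc⟩ := hf ε hε
  choose N hN using hcover
  obtain ⟨g, hg, hgint, hS⟩ :=
    exists_measurable_hasFullOuterMeasure_le_add hfin (ENNReal.coe_ne_zero.2 hε.ne')
  obtain ⟨n, hn, hSn⟩ := hS.exists_measurable_eq N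
  have hblock k : ∫⁻ p, f p ∂(decouple (π.restrict (n ⁻¹' {k}))) ≤
      ∫⁻ q, (g q + 2 * ε) ∂(π.restrict (n ⁻¹' {k})) := by
    refine lintegral_decouple_le (hosc k) hg
      ((hSn.restrict (hn (measurableSet_singleton k))).mono ?_)
    rintro q ⟨⟨hfg, hNn⟩, hnk⟩
    have hNk : N q = k := hNn.trans hnk
    exact ⟨hNk ▸ hN q, hfg⟩
  refine ⟨decoupleAlong n π, fst_decoupleAlong hn, snd_decoupleAlong hn,
    decoupleAlong_absolutelyContinuous n π, ?_⟩
  calc ∫⁻ p, f p ∂(decoupleAlong n π)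
      = ∑' k, ∫⁻ p, f p ∂(decouple (π.restrict (n ⁻¹' {k}))) := lintegral_sum_measure _ _
    _ ≤ ∑' k, ∫⁻ q, (g q + 2 * ε) ∂(π.restrict (n ⁻¹' {k})) := ENNReal.tsum_le_tsum hblock
    _ = ∫⁻ q, (g q + 2 * ε) ∂π := by rw [← lintegral_sum_measure, sum_restrict_fiber hn]
    _ = ∫⁻ p, f p ∂π + 2 * ε * π Set.univ := by rw [lintegral_add_left hg, lintegral_const, hgint]

end Decoupling

section OptimalTransport

open ProbabilityTheory

variable {X : Type*} [MeasurableSpace X] {c : X → X → ℝ}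

lemma IsCoupling.prod (κ η : Measure X) [IsProbabilityMeasure κ] [IsProbabilityMeasure η] :
    IsCoupling κ η (κ.prod η) :=
  ⟨inferInstance, Measure.fst_prod, Measure.snd_prod⟩

lemma IsCoupling.bind_comp_fst {Y : Type*} [MeasurableSpace Y] {μ ν : Measure X}
    {γ : Measure (X × X)} (hγ : IsCoupling μ ν γ) {K : X → Measure Y} (hK : Measurable K) :
    γ.bind (K ∘ Prod.fst) = μ.bind K := by
  rw [← hγ.2.1, Measure.bind, Measure.bind, Measure.map_map hK measurable_fst]

lemma IsCoupling.bind_comp_snd {Y : Type*} [MeasurableSpace Y] {μ ν : Measure X}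
    {γ : Measure (X × X)} (hγ : IsCoupling μ ν γ) {K : X → Measure Y} (hK : Measurable K) :
    γ.bind (K ∘ Prod.snd) = ν.bind K := by
  rw [← hγ.2.2, Measure.bind, Measure.bind, Measure.map_map hK measurable_snd]

lemma exists_isCoupling_absolutelyContinuous_lintegral_le
    (hc : IsRectangularlyApproximable fun p : X × X => ENNReal.ofReal (c p.1 p.2))
    (κ η : Measure X) [IsProbabilityMeasure κ] [IsProbabilityMeasure η] {ε : ℝ≥0} (hε : 0 < ε) :
    ∃ π, IsCoupling κ η π ∧ π ≪ κ.prod η ∧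
      ∫⁻ p, ENNReal.ofReal (c p.1 p.2) ∂π ≤ cost c κ η + ε := by
  rcases eq_or_ne (cost c κ η) ⊤ with htop | hfin
  · exact ⟨κ.prod η, .prod κ η, .rfl, by simp [htop]⟩
  have hthird : 0 < ε / 3 := by positivity
  have hlt : cost c κ η < cost c κ η + (ε / 3 : ℝ≥0) :=
    ENNReal.lt_add_right hfin (ENNReal.coe_ne_zero.2 hthird.ne')
  obtain ⟨π, hπ⟩ := iInf_lt_iff.1 hlt
  obtain ⟨⟨hprob, hfst, hsnd⟩, hcost⟩ := iInf_lt_iff.1 hπ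
  obtain ⟨π', hfst', hsnd', hac, hle⟩ :=
    exists_absolutelyContinuous_lintegral_le_add hc (ne_top_of_lt hcost) hthird
  have hprob' : IsProbabilityMeasure π' :=
    ⟨by rw [← Measure.fst_univ, hfst', Measure.fst_univ, measure_univ]⟩
  refine ⟨π', ⟨hprob', hfst'.trans hfst, hsnd'.trans hsnd⟩, ?_, hle.trans ?_⟩
  · rwa [Measure.fst, hfst, Measure.snd, hsnd] at hac
  calc ∫⁻ p, ENNReal.ofReal (c p.1 p.2) ∂π + 2 * (ε / 3 : ℝ≥0) * π Set.univ
      ≤ cost c κ η + (ε / 3 : ℝ≥0) + 2 * (ε / 3 : ℝ≥0) := by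
        rw [measure_univ, mul_one]
        gcongr
    _ = cost c κ η + ε := by
        rw [add_assoc]
        congr 1
        norm_cast
        ring

lemma exists_isCoupling_bind_isAverage {Ω : Type*} [MeasurableSpace Ω] {γ : Measure Ω}
    [IsProbabilityMeasure γ] {K L : Ω → Measure X} (hK : Measurable K) (hL : Measurable L)
    [∀ ω, IsProbabilityMeasure (K ω)] [∀ ω, IsProbabilityMeasure (L ω)]
    {P : Ω → Measure (X × X)} (hP : ∀ ω, IsCoupling (K ω) (L ω) (P ω))
    (hac : ∀ ω, P ω ≪ (K ω).prod (L ω)) {S : Set Ω} (hS : HasFullOuterMeasure γ S) :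
    ∃ ρ, IsCoupling (γ.bind K) (γ.bind L) ρ ∧ IsAverage γ S P ρ := by
  have (ω : Ω) : IsProbabilityMeasure (P ω) := (hP ω).1
  let 𝓚 : Kernel Ω X := ⟨K, hK⟩
  let 𝓛 : Kernel Ω X := ⟨L, hL⟩
  have : IsMarkovKernel 𝓚 := ⟨‹∀ ω, IsProbabilityMeasure (K ω)›⟩
  have : IsMarkovKernel 𝓛 := ⟨‹∀ ω, IsProbabilityMeasure (L ω)›⟩
  obtain ⟨ρ, hprob, hρ⟩ := exists_isAverage (P := P) (𝓚.prod 𝓛)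
    (fun ω => by rw [Kernel.prod_apply]; exact hac ω) hS
  exact ⟨ρ, ⟨hprob, hρ.map_eq_bind hK measurable_fst fun ω _ => (hP ω).2.1,
    hρ.map_eq_bind hL measurable_snd fun ω _ => (hP ω).2.2⟩, hρ⟩

theorem statement4_general
    (hc : IsRectangularlyApproximable fun p : X × X => ENNReal.ofReal (c p.1 p.2))
    {Ω : Type*} [MeasurableSpace Ω] {γ : Measure Ω} (hγ : IsProbabilityMeasure γ)
    {K L : Ω → Measure X} (hK : Measurable K) (hL : Measurable L)
    (hKprob : ∀ ω, IsProbabilityMeasure (K ω)) (hLprob : ∀ ω, IsProbabilityMeasure (L ω)) :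
    cost c (γ.bind K) (γ.bind L) ≤ ∫⁻ ω, cost c (K ω) (L ω) ∂γ := by
  refine ENNReal.le_of_forall_pos_le_add fun ε hε hfin => ?_
  have hhalf : 0 < ε / 2 := half_pos hε
  choose P hP hac hPcost using fun ω =>
    exists_isCoupling_absolutelyContinuous_lintegral_le hc (K ω) (L ω) hhalf
  obtain ⟨g, hg, hgint, hS⟩ :=
    exists_measurable_hasFullOuterMeasure_le_add hfin.ne (ENNReal.coe_ne_zero.2 hhalf.ne')
  obtain ⟨ρ, hcoupling, hρ⟩ := exists_isCoupling_bind_isAverage hK hL hP hac hS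
  have hε2 : ((ε / 2 : ℝ≥0) : ℝ≥0∞) + (ε / 2 : ℝ≥0) = ε := by
    rw [← ENNReal.coe_add, add_halves]
  calc cost c (γ.bind K) (γ.bind L)
      ≤ ∫⁻ p, ENNReal.ofReal (c p.1 p.2) ∂ρ := iInf₂_le ρ hcoupling
    _ ≤ ∫⁻ ω, (g ω + ε) ∂γ := hρ _ _ (hg.add_const _) fun ω hω => by
        calc ∫⁻ p, ENNReal.ofReal (c p.1 p.2) ∂(P ω)
            ≤ cost c (K ω) (L ω) + (ε / 2 : ℝ≥0) := hPcost ω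
          _ ≤ g ω + (ε / 2 : ℝ≥0) + (ε / 2 : ℝ≥0) := add_le_add_left hω _
          _ = g ω + ε := by rw [add_assoc, hε2]
    _ = ∫⁻ ω, cost c (K ω) (L ω) ∂γ + ε := by
        rw [lintegral_add_left hg, hgint, lintegral_const, measure_univ, mul_one]

end OptimalTransport

end PoC

namespace PoC

variable {X : Type*} [MeasurableSpace X]

/-- For Markov kernels `K`, `L` and any coupling `γ` of `μ`, `ν`,
`C_c(μK, νL) ≤ ∫ C_c(δ_x K, δ_y L) dγ(x,y)`, where `δ_x K = K x`. -/
theorem statement4 {c : X → X → ℝ} {B : ℝ} (hC : HypC c B)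
    (K L : X → Measure X) (hK : IsMarkovKernelW c K) (hL : IsMarkovKernelW c L)
    (μ ν : Measure X) (hμ : IsProbabilityMeasure μ) (hν : IsProbabilityMeasure ν)
    (γ : Measure (X × X)) (hγ : IsCoupling μ ν γ) :
    cost c (μ.bind K) (ν.bind L) ≤ ∫⁻ p, cost c (K p.1) (L p.2) ∂γ := by
  rw [← hγ.bind_comp_fst hK.1, ← hγ.bind_comp_snd hL.1]
  exact statement4_general hC.isRectangularlyApproximable hγ.1 (hK.1.comp measurable_fst)
    (hL.1.comp measurable_snd) (fun p => hK.2.1 p.1) fun p => hL.2.1 p.2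

end PoC
end

section
/- Let (Π,c) be a semimetric space satisfying Hypothesis (C) and let θ : Π × Π → [−∞,∞) be upper semicontinuous and satisfy θ(x,y) ≤ α₀ + β₀[c(z₀,x) + c(z₁,y)] for all x,y ∈ Π, for some z₀,z₁ ∈ Π and α₀,β₀ ≥ 0. Then for all x₀,y₀ ∈ Π: θ(x₀,y₀) = inf{ f(x₀) + g(y₀) : f,g ∈ C_{b,c}(Π) and θ(x,y) ≤ f(x) + g(y) for all x,y ∈ Π }. -/
open MeasureTheory Filter Topology ENNReal

namespace PoC

variable {X : Type*} [MeasurableSpace X]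

/-- Upper semicontinuity of `θ : X × X → [-∞,∞)` with respect to the product
semimetric topology, expressed sequentially. -/
def USCPair (c : X → X → ℝ) (θ : X → X → EReal) : Prop :=
  ∀ (u v : ℕ → X) (a b : X), CConv c u a → CConv c v b →
    Filter.limsup (fun n => θ (u n) (v n)) Filter.atTop ≤ θ a b

/-!
If `θ x₀ y₀ < t`, semicontinuity keeps `θ` below `t` on a product of balls of radius `δ` around
`(x₀, y₀)`. Away from it `c x₀ x + d y₀ y ≥ δ`, so adding to the constant `t` a sufficiently
steep multiple of this sum absorbs the growth of any given majorant `f₁ ⊕ g₁`. The result is again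
of the form `f ⊕ g` with `f` and `g` continuous of controlled growth, and its value at `(x₀, y₀)`
is `t`.
-/

section Majorants

variable {Y Z : Type*} {c : Y → Y → ℝ} {d : Z → Z → ℝ}

/-- A semimetric which satisfies (C2) for some constant `B`, and (C3) with one of the two
arguments fixed. -/
structure IsContinuousRelaxedSemimetric (c : Y → Y → ℝ) : Prop extends IsSemimetric c where
  exists_relaxed : ∃ B : ℝ, ∀ x y z, c x y ≤ B * (c x z + c z y)
  seqContinuous : ∀ a, SeqContinuous c (c a)

/-- Sequential upper semicontinuity at `(a, b)` of a function of two variables, for two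
semimetrics `c` and `d`; `USCPair c θ` is this property for `d = c` at every point. -/
def SeqUpperSemicontinuousAt {α : Type*} [CompleteLattice α] (c : Y → Y → ℝ) (d : Z → Z → ℝ)
    (θ : Y → Z → α) (a : Y) (b : Z) : Prop :=
  ∀ (u : ℕ → Y) (v : ℕ → Z), CConv c u a → CConv d v b →
    limsup (fun n => θ (u n) (v n)) atTop ≤ θ a b

lemma IsSemimetric.self_eq_zero (hc : IsSemimetric c) (a : Y) : c a a = 0 :=
  (hc.eq_zero_iff a a).2 rfl

lemma IsSemimetric.cConv_const (hc : IsSemimetric c) (a : Y) : CConv c (fun _ => a) a := by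
  simp only [CConv, hc.self_eq_zero, tendsto_const_nhds_iff]

lemma HypC.isContinuousRelaxedSemimetric {B : ℝ} (hC : HypC c B) :
    IsContinuousRelaxedSemimetric c where
  toIsSemimetric := hC.semimetric
  exists_relaxed := ⟨B, hC.relaxed⟩
  seqContinuous a _ _ hu := hC.contC _ _ _ _ (hC.semimetric.cConv_const a) hu

lemma IsContinuousRelaxedSemimetric.isCbc_const_add_const_mul
    (hc : IsContinuousRelaxedSemimetric c) (s K : ℝ) (a : Y) :
    IsCbc c (fun x => s + K * c a x) := by
  refine ⟨fun u l hu => ((hc.seqContinuous a u l hu).const_mul K).const_add s,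
    |s|, |K|, abs_nonneg s, abs_nonneg K, a, fun x => ?_⟩
  calc |s + K * c a x| ≤ |s| + |K * c a x| := abs_add_le _ _
    _ = |s| + |K| * c a x := by rw [abs_mul, abs_of_nonneg (hc.nonneg a x)]

lemma IsContinuousRelaxedSemimetric.exists_nonneg_relaxed (hc : IsContinuousRelaxedSemimetric c) :
    ∃ B : ℝ, 0 ≤ B ∧ ∀ x y z, c x y ≤ B * (c x z + c z y) := by
  obtain ⟨B, hB⟩ := hc.exists_relaxed
  exact ⟨|B|, abs_nonneg B, fun x y z => (hB x y z).trans <|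
    mul_le_mul_of_nonneg_right (le_abs_self B) (add_nonneg (hc.nonneg x z) (hc.nonneg z y))⟩

lemma IsCbc.exists_abs_le {f : Y → ℝ} (hf : IsCbc c f) (hc : IsContinuousRelaxedSemimetric c)
    (a : Y) : ∃ M₀ M₁ : ℝ, 0 ≤ M₁ ∧ ∀ x, |f x| ≤ M₀ + M₁ * c a x := by
  obtain ⟨-, M₀, M₁, -, hM₁, z, hbound⟩ := hf
  obtain ⟨B, hB, hrelaxed⟩ := hc.exists_nonneg_relaxed
  refine ⟨M₀ + M₁ * (B * c z a), M₁ * B, mul_nonneg hM₁ hB, fun x => ?_⟩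
  calc |f x| ≤ M₀ + M₁ * c z x := hbound x
    _ ≤ M₀ + M₁ * (B * (c z a + c a x)) := by gcongr; exact hrelaxed z x a
    _ = M₀ + M₁ * (B * c z a) + M₁ * B * c a x := by ring

lemma SeqUpperSemicontinuousAt.exists_forall_lt {α : Type*} [CompleteLinearOrder α]
    {θ : Y → Z → α} {a : Y} {b : Z} (hθ : SeqUpperSemicontinuousAt c d θ a b)
    (hc : ∀ x y, 0 ≤ c x y) (hd : ∀ x y, 0 ≤ d x y) {t : α} (ht : θ a b < t) :
    ∃ δ > (0 : ℝ), ∀ x y, c x a < δ → d y b < δ → θ x y < t := by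
  by_contra! h
  choose u v hu hv huv using fun n : ℕ => h (1 / ((n : ℝ) + 1)) Nat.one_div_pos_of_nat
  have hua : CConv c u a := squeeze_zero (fun n => hc _ _) (fun n => (hu n).le)
    tendsto_one_div_add_atTop_nhds_zero_nat
  have hvb : CConv d v b := squeeze_zero (fun n => hd _ _) (fun n => (hv n).le)
    tendsto_one_div_add_atTop_nhds_zero_nat
  have hle : t ≤ limsup (fun n => θ (u n) (v n)) atTop :=
    le_limsup_of_frequently_le (Eventually.of_forall huv).frequently
  exact (hle.trans (hθ u v hua hvb)).not_gt ht

lemma exists_slope_forall_le_add_mul (A t : ℝ) {δ : ℝ} (hδ : 0 < δ) :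
    ∃ M : ℝ, 0 ≤ M ∧ ∀ r, δ ≤ r → A ≤ t + M * r := by
  refine ⟨|A - t| / δ, by positivity, fun r hr => ?_⟩
  calc A ≤ t + |A - t| := by linarith [le_abs_self (A - t)]
    _ = t + |A - t| / δ * δ := by rw [div_mul_cancel₀ _ hδ.ne']
    _ ≤ t + |A - t| / δ * r := by gcongr

lemma SeqUpperSemicontinuousAt.exists_isCbc_majorant (hc : IsContinuousRelaxedSemimetric c)
    (hd : IsContinuousRelaxedSemimetric d) {θ : Y → Z → EReal} {x₀ : Y} {y₀ : Z}
    (hθ : SeqUpperSemicontinuousAt c d θ x₀ y₀) {f₁ : Y → ℝ} {g₁ : Z → ℝ} (hf₁ : IsCbc c f₁)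
    (hg₁ : IsCbc d g₁) (hle : ∀ x y, θ x y ≤ ((f₁ x + g₁ y : ℝ) : EReal)) {t : ℝ}
    (ht : θ x₀ y₀ < t) :
    ∃ f g, IsCbc c f ∧ IsCbc d g ∧ (∀ x y, θ x y ≤ ((f x + g y : ℝ) : EReal)) ∧
      f x₀ + g y₀ = t := by
  obtain ⟨δ, hδ, hnear⟩ := hθ.exists_forall_lt hc.nonneg hd.nonneg ht
  obtain ⟨A, K, hK, hf⟩ := hf₁.exists_abs_le hc x₀
  obtain ⟨A', K', hK', hg⟩ := hg₁.exists_abs_le hd y₀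
  obtain ⟨M, hM, hsteep⟩ := exists_slope_forall_le_add_mul (A + A') t hδ
  refine ⟨fun x => t / 2 + (K + M) * c x₀ x, fun y => t / 2 + (K' + M) * d y₀ y,
    hc.isCbc_const_add_const_mul _ _ x₀, hd.isCbc_const_add_const_mul _ _ y₀, fun x y => ?_,
    by simp only [hc.self_eq_zero, hd.self_eq_zero]; ring⟩
  have hx := hc.nonneg x₀ x
  have hy := hd.nonneg y₀ y
  rcases lt_or_ge (c x₀ x + d y₀ y) δ with hlt | hge
  · have hθt : θ x y < t :=
      hnear x y (by linarith [hc.symm x x₀]) (by linarith [hd.symm y y₀])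
    refine hθt.le.trans (EReal.coe_le_coe_iff.2 ?_)
    have hfx : 0 ≤ (K + M) * c x₀ x := by positivity
    have hgy : 0 ≤ (K' + M) * d y₀ y := by positivity
    linarith
  · refine (hle x y).trans (EReal.coe_le_coe_iff.2 ?_)
    calc f₁ x + g₁ y
        ≤ (A + K * c x₀ x) + (A' + K' * d y₀ y) :=
          add_le_add ((le_abs_self _).trans (hf x)) ((le_abs_self _).trans (hg y))
      _ = (A + A') + (K * c x₀ x + K' * d y₀ y) := by ring
      _ ≤ (t + M * (c x₀ x + d y₀ y)) + (K * c x₀ x + K' * d y₀ y) :=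
          add_le_add_left (hsteep _ hge) _
      _ = t / 2 + (K + M) * c x₀ x + (t / 2 + (K' + M) * d y₀ y) := by ring

theorem statement5_general (hc : IsContinuousRelaxedSemimetric c)
    (hd : IsContinuousRelaxedSemimetric d) {θ : Y → Z → EReal} {x₀ : Y} {y₀ : Z}
    (hθ : SeqUpperSemicontinuousAt c d θ x₀ y₀) {f₁ : Y → ℝ} {g₁ : Z → ℝ} (hf₁ : IsCbc c f₁)
    (hg₁ : IsCbc d g₁) (hle : ∀ x y, θ x y ≤ ((f₁ x + g₁ y : ℝ) : EReal)) :
    θ x₀ y₀ = sInf { v : EReal | ∃ f g, IsCbc c f ∧ IsCbc d g ∧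
      (∀ x y, θ x y ≤ ((f x + g y : ℝ) : EReal)) ∧ v = ((f x₀ + g y₀ : ℝ) : EReal) } := by
  apply le_antisymm
  · refine le_sInf ?_
    rintro _ ⟨f, g, -, -, hfg, rfl⟩
    exact hfg x₀ y₀
  · rw [← EReal.le_of_forall_lt_iff_le]
    intro t ht
    obtain ⟨f, g, hf, hg, hfg, rfl⟩ := hθ.exists_isCbc_majorant hc hd hf₁ hg₁ hle ht
    exact sInf_le ⟨f, g, hf, hg, hfg, rfl⟩

end Majorants

/-- An upper semicontinuous `θ : X × X → [-∞,∞)` with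
`θ(x,y) ≤ α₀ + β₀ [c(z₀,x) + c(z₁,y)]` is, at every point, the infimum of
`f(x₀) + g(y₀)` over pairs `f, g ∈ C_{b,c}(X)` with `θ ≤ f ⊕ g`. -/
theorem statement5 {c : X → X → ℝ} {B : ℝ} (hC : HypC c B)
    (θ : X → X → EReal) (hne : ∀ x y, θ x y < ⊤) (husc : USCPair c θ)
    (z₀ z₁ : X) (α₀ β₀ : ℝ) (hα₀ : 0 ≤ α₀) (hβ₀ : 0 ≤ β₀)
    (hbd : ∀ x y, θ x y ≤ ((α₀ + β₀ * (c z₀ x + c z₁ y) : ℝ) : EReal)) :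
    ∀ x₀ y₀ : X,
      θ x₀ y₀ = sInf { v : EReal | ∃ f g : X → ℝ, IsCbc c f ∧ IsCbc c g ∧
        (∀ x y, θ x y ≤ ((f x + g y : ℝ) : EReal)) ∧ v = ((f x₀ + g y₀ : ℝ) : EReal) } := by
  intro x₀ y₀
  have hc := hC.isContinuousRelaxedSemimetric
  exact statement5_general hc hc (fun u v => husc u v x₀ y₀)
    (hc.isCbc_const_add_const_mul (α₀ / 2) β₀ z₀) (hc.isCbc_const_add_const_mul (α₀ / 2) β₀ z₁)
    fun x y => (hbd x y).trans_eq (congrArg _ (by ring))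

end PoC
end

section
/- Let F : [0,∞) → [0,∞) be continuous and let G : [0,∞) → ℝ be upper semicontinuous and bounded on every compact subinterval of [0,∞). Suppose the right-hand upper Dini derivative satisfies D⁺F(t) := limsup_{h↓0} (F(t+h) − F(t))/h ≤ G(t) for all t ≥ 0. Then F(t) − F(s) ≤ ∫_s^t G(τ) dτ for all 0 ≤ s ≤ t < ∞. -/
/-!
By the Vitali–Carathéodory theorem `G` has a lower semicontinuous majorant `H > G` with almost the
same integral over `[s, t]`. If `G x < r < H x`, then at points `u` arbitrarily close to `x` on its
right the increment `F u - F x` is at most `r * (u - x)`, which is at most `∫ τ in x..u, H τ` by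
lower semicontinuity of `H`. So the continuous function `u ↦ F u - ∫ τ in s..u, H τ` does not exceed
its value at `x` at these points. Its sublevel set at the value taken at `s` is then closed and has
no last point before `t`, hence contains `t`.
-/

open MeasureTheory Filter Topology

namespace PoC

theorem le_left_of_frequently_le {α β : Type*} [ConditionallyCompleteLinearOrder α]
    [TopologicalSpace α] [OrderTopology α] [Preorder β] [TopologicalSpace β] [ClosedIicTopology β]
    {f : α → β} {a b : α} (hab : a ≤ b) (hf : ContinuousOn f (Set.Icc a b))
    (hle : ∀ x ∈ Set.Ico a b, ∃ᶠ u in 𝓝[>] x, f u ≤ f x) : f b ≤ f a := by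
  have sublevel_closed : IsClosed (f ⁻¹' Set.Iic (f a) ∩ Set.Icc a b) := by
    rw [Set.inter_comm]
    exact hf.preimage_isClosed_of_isClosed isClosed_Icc isClosed_Iic
  refine sublevel_closed.Icc_subset_of_forall_exists_gt le_rfl (fun x ⟨hxa, hx⟩ v hxv => ?_)
    (Set.right_mem_Icc.2 hab)
  obtain ⟨u, hux, hu⟩ := ((hle x hx).and_eventually (Ioc_mem_nhdsGT hxv)).exists
  exact ⟨u, hux.trans hxa, hu⟩

theorem sub_le_integral_of_frequently_sub_le_integral {g f : ℝ → ℝ} {a b : ℝ} (hab : a ≤ b)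
    (hg : ContinuousOn g (Set.Icc a b)) (hf : IntegrableOn f (Set.Icc a b))
    (hle : ∀ x ∈ Set.Ico a b, ∃ᶠ u in 𝓝[>] x, g u - g x ≤ ∫ τ in x..u, f τ) :
    g b - g a ≤ ∫ τ in a..b, f τ := by
  have primitive_cont : ContinuousOn (fun u => ∫ τ in a..u, f τ) (Set.Icc a b) := by
    rw [← Set.uIcc_of_le hab] at hf ⊢
    exact intervalIntegral.continuousOn_primitive_interval hf
  have hf_left : ∀ u ∈ Set.Icc a b, IntervalIntegrable f volume a u := fun u hu =>
    (intervalIntegrable_iff_integrableOn_Icc_of_le hu.1).2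
      (hf.mono_set (Set.Icc_subset_Icc_right hu.2))
  have defect_le : g b - ∫ τ in a..b, f τ ≤ g a - ∫ τ in a..a, f τ := by
    refine le_left_of_frequently_le hab (hg.sub primitive_cont) fun x hx => ?_
    refine ((hle x hx).and_eventually (Ioo_mem_nhdsGT hx.2)).mono fun u ⟨hu, hxu⟩ => ?_
    rw [← intervalIntegral.integral_interval_sub_left
      (hf_left u ⟨hx.1.trans hxu.1.le, hxu.2.le⟩)
      (hf_left x ⟨hx.1, hx.2.le⟩)] at hu
    simp only [Pi.sub_apply]
    linarith
  rw [intervalIntegral.integral_same] at defect_le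
  linarith

theorem eventually_mul_sub_le_integral_toReal {H : ℝ → EReal} {x b r : ℝ} (hxb : x < b)
    (hint : IntegrableOn (fun y => (H y).toReal) (Set.Icc x b))
    (hfin : ∀ᵐ y ∂volume.restrict (Set.Icc x b), H y < ⊤)
    (hr : ∀ᶠ y in 𝓝[>] x, (r : EReal) ≤ H y) :
    ∀ᶠ u in 𝓝[>] x, r * (u - x) ≤ ∫ y in x..u, (H y).toReal := by
  obtain ⟨c, hxc, hc⟩ := (nhdsGT_basis x).eventually_iff.1 hr
  filter_upwards [Ioo_mem_nhdsGT (lt_min hxc hxb)] with u ⟨hxu, hu⟩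
  have hub : Set.Ioc x u ⊆ Set.Icc x b :=
    (Set.Ioc_subset_Ioc_right (hu.le.trans (min_le_right c b))).trans Set.Ioc_subset_Icc_self
  have r_le : ∀ᵐ y ∂volume.restrict (Set.Ioc x u), r ≤ (H y).toReal := by
    filter_upwards [ae_restrict_of_ae_restrict_of_subset hub hfin,
      ae_restrict_mem measurableSet_Ioc] with y hy hyu
    have hrH : (r : EReal) ≤ H y := hc ⟨hyu.1, hyu.2.trans_lt (hu.trans_le (min_le_left c b))⟩
    exact EReal.toReal_le_toReal hrH (EReal.coe_ne_bot r) hy.ne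
  calc r * (u - x) = ∫ _ in x..u, r := by
        rw [intervalIntegral.integral_const, smul_eq_mul, mul_comm]
    _ ≤ ∫ y in x..u, (H y).toReal := by
        rw [intervalIntegral.integral_of_le hxu.le, intervalIntegral.integral_of_le hxu.le]
        exact integral_mono_ae (integrable_const r) (hint.mono_set hub) r_le

theorem eventually_slope_lt_of_quotient_le {F : ℝ → ℝ} {x c r : ℝ} (hcr : c < r)
    (hquot : ∀ ε > 0, ∃ δ > 0, ∀ h, 0 < h → h < δ → (F (x + h) - F x) / h ≤ c + ε) :
    ∀ᶠ u in 𝓝[>] x, slope F x u < r := by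
  obtain ⟨ε, hεr, hε⟩ := exists_add_lt_and_pos_of_lt hcr
  obtain ⟨δ, hδ, hle⟩ := hquot ε hε
  filter_upwards [Ioo_mem_nhdsGT (lt_add_of_pos_right x hδ)] with u ⟨hxu, hu⟩
  have hu_le := hle (u - x) (sub_pos.2 hxu) (sub_lt_iff_lt_add'.2 hu)
  rw [add_sub_cancel] at hu_le
  rw [slope_def_field]
  exact hu_le.trans_lt hεr

theorem integrableOn_of_upperSemicontinuousOn_of_bounded {X : Type*} [TopologicalSpace X]
    [MeasurableSpace X] [OpensMeasurableSpace X] {μ : Measure X} {G : X → ℝ} {K : Set X} {M : ℝ}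
    (hK : MeasurableSet K) (hμK : μ K ≠ ⊤) (hG : UpperSemicontinuousOn G K)
    (hM : ∀ x ∈ K, |G x| ≤ M) : IntegrableOn G K μ := by
  have hmeas : AEMeasurable G (μ.restrict K) :=
    (aemeasurable_restrict_iff_comap_subtype hK).2
      (upperSemicontinuousOn_iff_restrict.2 hG).measurable.aemeasurable
  exact .of_bound hμK.lt_top hmeas.aestronglyMeasurable M (ae_restrict_of_forall_mem hK hM)

theorem statement6_general {F G : ℝ → ℝ} {s t : ℝ} (hst : s ≤ t)
    (hF : ContinuousOn F (Set.Icc s t)) (hG : IntegrableOn G (Set.Icc s t))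
    -- the right-hand lower Dini derivative of `F` is at most `G`
    (hDini : ∀ x ∈ Set.Ico s t, ∀ r, G x < r → ∃ᶠ u in 𝓝[>] x, slope F x u < r) :
    F t - F s ≤ ∫ τ in s..t, G τ := by
  refine le_of_forall_pos_lt_add fun ε hε => ?_
  obtain ⟨H, hGH, H_lsc, H_int, H_fin, H_integral_lt⟩ :=
    exists_lt_lowerSemicontinuous_integral_lt G hG hε
  have increment_le : F t - F s ≤ ∫ τ in s..t, (H τ).toReal := by
    refine sub_le_integral_of_frequently_sub_le_integral hst hF H_int fun x hx => ?_
    obtain ⟨r, hGr, hrH⟩ := EReal.lt_iff_exists_real_btwn.1 (hGH x)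
    have hsub : Set.Icc x t ⊆ Set.Icc s t := Set.Icc_subset_Icc_left hx.1
    have le_integral : ∀ᶠ u in 𝓝[>] x, r * (u - x) ≤ ∫ τ in x..u, (H τ).toReal :=
      eventually_mul_sub_le_integral_toReal hx.2 (IntegrableOn.mono_set H_int hsub)
        (ae_restrict_of_ae_restrict_of_subset hsub H_fin)
        (((H_lsc x r hrH).filter_mono nhdsWithin_le_nhds).mono fun _ => le_of_lt)
    refine ((hDini x hx r (EReal.coe_lt_coe_iff.1 hGr)).and_eventually
      (le_integral.and self_mem_nhdsWithin)).mono fun u ⟨hslope, hu, hxu⟩ => ?_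
    rw [slope_def_field, div_lt_iff₀ (sub_pos.2 hxu)] at hslope
    exact hslope.le.trans hu
  rw [intervalIntegral.integral_of_le hst, ← integral_Icc_eq_integral_Ioc] at increment_le ⊢
  exact increment_le.trans_lt H_integral_lt

/-- If `F : [0,∞) → [0,∞)` is continuous, `G : [0,∞) → ℝ` is upper
semicontinuous and bounded on compact subintervals, and the right-hand upper Dini
derivative of `F` is bounded by `G` on `[0,∞)`, then `F t - F s ≤ ∫_s^t G`. -/
theorem statement6 (F G : ℝ → ℝ)
    (hFnonneg : ∀ t : ℝ, 0 ≤ t → 0 ≤ F t)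
    (hFcont : ContinuousOn F (Set.Ici (0 : ℝ)))
    (hGusc : UpperSemicontinuousOn G (Set.Ici (0 : ℝ)))
    (hGbdd : ∀ a b : ℝ, 0 ≤ a → ∃ M : ℝ, ∀ t ∈ Set.Icc a b, |G t| ≤ M)
    -- `D⁺F(t) = limsup_{h↓0} (F(t+h) - F(t))/h ≤ G(t)` for all `t ≥ 0`:
    (hDini : ∀ t : ℝ, 0 ≤ t → ∀ ε > (0 : ℝ), ∃ δ > (0 : ℝ), ∀ h : ℝ, 0 < h → h < δ →
      (F (t + h) - F t) / h ≤ G t + ε) :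
    ∀ s t : ℝ, 0 ≤ s → s ≤ t → F t - F s ≤ ∫ τ in s..t, G τ := by
  intro s t hs hst
  have hsub : Set.Icc s t ⊆ Set.Ici 0 := fun x hx => hs.trans hx.1
  obtain ⟨M, hM⟩ := hGbdd s t hs
  exact statement6_general hst (hFcont.mono hsub)
    (integrableOn_of_upperSemicontinuousOn_of_bounded measurableSet_Icc measure_Icc_lt_top.ne
      (hGusc.mono hsub) hM)
    fun x hx r hr => (eventually_slope_lt_of_quotient_le hr (hDini x (hs.trans hx.1))).frequently

end PoC
end

section
/- Let (Π,c) be a semimetric space satisfying Hypothesis (C) and let (κ_t)_{t≥0} be a Feller semigroup on Π. Suppose there exist z ∈ Π, α, β ≥ 0 and a continuous function ρ : [0,∞) → [0,∞) with ρ(t) → 0 as t ↓ 0 such that ∫_Π c(x,y) dκ_t(x)(y) ≤ ρ(t)·[α + β·c(z,x)] for all t ≥ 0 and x ∈ Π. Then the semigroup is c-continuous: for every μ ∈ P_c(Π), one has μκ_t ∈ P_c(Π) for all t ≥ 0 and the map t ↦ μκ_t is continuous with respect to C_c. -/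
open MeasureTheory Filter Topology ENNReal

namespace PoC

variable {X : Type*}

/-- A `c`-sequentially compact subset of `X`. -/
def SeqCompactC (c : X → X → ℝ) (K : Set X) : Prop :=
  ∀ u : ℕ → X, (∀ n, u n ∈ K) → ∃ l ∈ K, ∃ φ : ℕ → ℕ, StrictMono φ ∧ CConv c (u ∘ φ) l

/-- `φ ∈ C₀(X)`: continuous and vanishing at infinity (w.r.t. the `c`-topology). -/
def IsC0 (c : X → X → ℝ) (φ : X → ℝ) : Prop :=
  SeqContinuous c φ ∧
    ∀ ε > (0 : ℝ), ∃ K : Set X, SeqCompactC c K ∧ ∀ x ∉ K, |φ x| < ε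

/-- `φ ∈ C₀~(X)`: continuous with a constant limit at infinity,
i.e. `φ - a ∈ C₀(X)` for some constant `a`. -/
def IsC0sim (c : X → X → ℝ) (φ : X → ℝ) : Prop :=
  ∃ a : ℝ, IsC0 c (fun x => φ x - a)

end PoC

namespace PoC

variable {X : Type*} [MeasurableSpace X]

/-- A Feller (probability) semigroup on `X`, given by its transition kernels `κ_t`. -/
structure FellerSG (c : X → X → ℝ) (κ : ℝ → X → Measure X) : Prop where
  kernel : ∀ t : ℝ, 0 ≤ t → IsMarkovKernelW c (κ t)
  init : ∀ x : X, κ 0 x = Measure.dirac x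
  chapman : ∀ t : ℝ, 0 ≤ t → ∀ s : ℝ, 0 ≤ s → ∀ x : X,
    κ (t + s) x = (κ t x).bind (κ s)
  mapsC0 : ∀ t : ℝ, 0 ≤ t → ∀ φ : X → ℝ, IsC0 c φ →
    IsC0 c (fun x => ∫ y, φ y ∂(κ t x))
  strongCont : ∀ φ : X → ℝ, IsC0 c φ → ∀ ε > (0 : ℝ), ∃ δ > (0 : ℝ),
    ∀ t : ℝ, 0 < t → t < δ → ∀ x : X, |(∫ y, φ y ∂(κ t x)) - φ x| ≤ ε

/-- The Feller semigroup `κ` is `c`-continuous: it preserves `P_c(X)` and the Markov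
flows `t ↦ μ κ_t` are continuous in the Wasserstein-`c` topology. -/
def CContSG (c : X → X → ℝ) (κ : ℝ → X → Measure X) : Prop :=
  ∀ μ : Measure X, MemPc c μ →
    (∀ t : ℝ, 0 ≤ t → MemPc c (μ.bind (κ t))) ∧
    ∀ t : ℝ, 0 ≤ t →
      Filter.Tendsto (fun s => cost c (μ.bind (κ s)) (μ.bind (κ t)))
        (nhdsWithin t (Set.Ici (0 : ℝ))) (nhds 0)

/-- `φ` belongs to the domain of the generator of `κ` with value `ψ = Aφ`:
the difference quotients `(κ_tφ - φ)/t` converge to `ψ` uniformly as `t ↓ 0`. -/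
def InGen (c : X → X → ℝ) (κ : ℝ → X → Measure X) (φ ψ : X → ℝ) : Prop :=
  IsC0 c φ ∧ IsC0 c ψ ∧
    ∀ ε > (0 : ℝ), ∃ δ > (0 : ℝ), ∀ t : ℝ, 0 < t → t < δ → ∀ x : X,
      |((∫ y, φ y ∂(κ t x)) - φ x) / t - ψ x| ≤ ε

/-- The Dini derivative `ω_c(μ,ν;A,B)` of the transport cost between the Markov flows
generated by the semigroups `κ` and `lam`, valued in `EReal`. -/
noncomputable def omegaC (c : X → X → ℝ) (κ lam : ℝ → X → Measure X)
    (μ ν : Measure X) : EReal :=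
  Filter.limsup
    (fun t : ℝ =>
      ((((cost c (μ.bind (κ t)) (ν.bind (lam t))).toReal - (cost c μ ν).toReal) / t : ℝ) :
        EReal))
    (nhdsWithin (0 : ℝ) (Set.Ioi (0 : ℝ)))

end PoC

namespace PoC

/-
The transport cost from `μ` to `μ κ_h` is at most the mean displacement under `κ_h`, which is at
most the displacement relative to the weight `1 + c z x` times the weighted mass of `μ`. The
relative displacement tends to `0` as `h ↓ 0`, so it only remains to bound the weighted mass of
`μ κ_r` uniformly for `r ≤ t`. Writing `κ_r` as the `n`-fold iterate of `κ_{r/n}`, with `t/n` so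
small that one step multiplies the weighted mass by a bounded factor, gives such a bound.

Since `c` is not assumed measurable, `∫⁻` is a lower integral, for which Tonelli's theorem holds
only as the inequality `≤`.
-/

section Measure

variable {X Y : Type*} [MeasurableSpace X] [MeasurableSpace Y]

theorem lintegral_dirac_le (x : X) (f : X → ℝ≥0∞) : ∫⁻ y, f y ∂(Measure.dirac x) ≤ f x := by
  obtain ⟨g, hg, hgf, heq⟩ := exists_measurable_le_lintegral_eq (Measure.dirac x) f
  rw [heq, lintegral_dirac' x hg]
  exact hgf x

theorem lintegral_compProd_le (μ : Measure X) [SFinite μ] (K : ProbabilityTheory.Kernel X Y)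
    [ProbabilityTheory.IsSFiniteKernel K] (f : X × Y → ℝ≥0∞) :
    ∫⁻ p, f p ∂(μ.compProd K) ≤ ∫⁻ x, ∫⁻ y, f (x, y) ∂(K x) ∂μ := by
  obtain ⟨g, hg, hgf, heq⟩ := exists_measurable_le_lintegral_eq (μ.compProd K) f
  rw [heq, Measure.lintegral_compProd hg]
  exact lintegral_mono fun x => lintegral_mono fun y => hgf (x, y)

end Measure

section Cost

variable {X : Type*} [MeasurableSpace X] {c : X → X → ℝ}

theorem IsCoupling.swap {μ ν : Measure X} {γ : Measure (X × X)} (hγ : IsCoupling μ ν γ) :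
    IsCoupling ν μ (γ.map Prod.swap) := by
  obtain ⟨hprob, hfst, hsnd⟩ := hγ
  refine ⟨Measure.isProbabilityMeasure_map measurable_swap.aemeasurable, ?_, ?_⟩
  · rwa [Measure.map_map measurable_fst measurable_swap]
  · rwa [Measure.map_map measurable_snd measurable_swap]

theorem cost_comm (hsymm : ∀ x y, c x y = c y x) (μ ν : Measure X) :
    cost c μ ν = cost c ν μ := by
  suffices hle : ∀ μ ν : Measure X, cost c μ ν ≤ cost c ν μ from le_antisymm (hle μ ν) (hle ν μ)
  refine fun μ ν => le_iInf₂ fun γ hγ => ?_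
  calc cost c μ ν
      ≤ ∫⁻ p, ENNReal.ofReal (c p.1 p.2) ∂(γ.map Prod.swap) := iInf₂_le _ hγ.swap
    _ ≤ ∫⁻ p, ENNReal.ofReal (c p.2 p.1) ∂γ := lintegral_map_le _ _
    _ = ∫⁻ p, ENNReal.ofReal (c p.1 p.2) ∂γ := lintegral_congr fun p => by rw [hsymm]

theorem cost_bind_le_lintegral (μ : Measure X) [IsProbabilityMeasure μ] {K : X → Measure X}
    (hK : Measurable K) (hprob : ∀ x, IsProbabilityMeasure (K x)) :
    cost c μ (μ.bind K) ≤ ∫⁻ x, ∫⁻ y, ENNReal.ofReal (c x y) ∂(K x) ∂μ := by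
  let k : ProbabilityTheory.Kernel X X := ⟨K, hK⟩
  have : ProbabilityTheory.IsMarkovKernel k := ⟨hprob⟩
  have hcoup : IsCoupling μ (μ.bind K) (μ.compProd k) :=
    ⟨inferInstance, Measure.fst_compProd μ k, Measure.snd_compProd μ k⟩
  exact (iInf₂_le _ hcoup).trans (lintegral_compProd_le μ k _)

end Cost

section Weight

variable {X : Type*} {c : X → X → ℝ} {B : ℝ}

/-- The weight `1 + c z x`. The summand `1` makes it bounded below, so that displacements can be
measured relative to it. -/
noncomputable def weight (c : X → X → ℝ) (z x : X) : ℝ≥0∞ :=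
  1 + ENNReal.ofReal (c z x)

theorem one_le_weight (c : X → X → ℝ) (z x : X) : 1 ≤ weight c z x :=
  le_self_add

theorem weight_ne_top (c : X → X → ℝ) (z x : X) : weight c z x ≠ ⊤ := by
  unfold weight
  finiteness

theorem IsSemimetric.ofReal_le_mul_add (hc : IsSemimetric c)
    (hrelaxed : ∀ x y w, c x y ≤ B * (c x w + c w y)) (x y w : X) :
    ENNReal.ofReal (c x y) ≤
      ENNReal.ofReal B * (ENNReal.ofReal (c x w) + ENNReal.ofReal (c w y)) := by
  rw [← ENNReal.ofReal_add (hc.nonneg x w) (hc.nonneg w y),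
    ← ENNReal.ofReal_mul' (add_nonneg (hc.nonneg x w) (hc.nonneg w y))]
  exact ENNReal.ofReal_le_ofReal (hrelaxed x y w)

theorem IsSemimetric.weight_le (hc : IsSemimetric c) (hB : 1 ≤ B)
    (hrelaxed : ∀ x y w, c x y ≤ B * (c x w + c w y)) (z x y : X) :
    weight c z y ≤ ENNReal.ofReal B * (weight c z x + ENNReal.ofReal (c x y)) :=
  calc weight c z y
      ≤ ENNReal.ofReal B +
          ENNReal.ofReal B * (ENNReal.ofReal (c z x) + ENNReal.ofReal (c x y)) :=
        add_le_add (ENNReal.one_le_ofReal.2 hB) (hc.ofReal_le_mul_add hrelaxed z y x)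
    _ = ENNReal.ofReal B * (weight c z x + ENNReal.ofReal (c x y)) := by
        rw [weight]
        ring

variable [MeasurableSpace X] {z : X} {μ : Measure X} {K : X → Measure X}

/-- The mass of `μ` weighted by `1 + c z x`; for a probability measure it is `1` plus the
`c`-moment of `μ` around `z`. -/
noncomputable def weightedMass (c : X → X → ℝ) (z : X) (μ : Measure X) : ℝ≥0∞ :=
  ∫⁻ x, weight c z x ∂μ

theorem measure_univ_le_weightedMass (c : X → X → ℝ) (z : X) (μ : Measure X) :
    μ Set.univ ≤ weightedMass c z μ :=
  calc μ Set.univ = ∫⁻ _, 1 ∂μ := lintegral_one.symm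
    _ ≤ weightedMass c z μ := lintegral_mono (one_le_weight c z)

theorem weightedMass_eq (c : X → X → ℝ) (z : X) (μ : Measure X) :
    weightedMass c z μ = μ Set.univ + ∫⁻ x, ENNReal.ofReal (c z x) ∂μ := by
  simp only [weightedMass, weight, lintegral_add_left measurable_const, lintegral_one]

theorem lintegral_mul_weight_le (c : X → X → ℝ) (z : X) (μ : Measure X) (r : ℝ≥0∞) :
    ∫⁻ x, r * weight c z x ∂μ ≤ r * weightedMass c z μ := by
  rcases eq_or_ne r ⊤ with rfl | hr
  · calc ∫⁻ x, ⊤ * weight c z x ∂μ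
        ≤ ∫⁻ _, ⊤ ∂μ := lintegral_mono fun _ => le_top
      _ = ⊤ * μ Set.univ := lintegral_const ⊤
      _ ≤ ⊤ * weightedMass c z μ := by grw [measure_univ_le_weightedMass c z μ]
  · exact (lintegral_const_mul' r _ hr).le

theorem IsSemimetric.memPc_iff_weightedMass_ne_top (hc : IsSemimetric c)
    (hrelaxed : ∀ x y w, c x y ≤ B * (c x w + c w y)) [IsProbabilityMeasure μ] :
    MemPc c μ ↔ weightedMass c z μ ≠ ⊤ := by
  rw [weightedMass_eq, measure_univ]
  refine ⟨fun hμ => ENNReal.add_ne_top.2 ⟨ENNReal.one_ne_top, (hμ.2 z).ne⟩,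
    fun hfin => ⟨inferInstance, fun w => ?_⟩⟩
  have hz : ∫⁻ x, ENNReal.ofReal (c z x) ∂μ ≠ ⊤ := (ENNReal.add_ne_top.1 hfin).2
  calc ∫⁻ x, ENNReal.ofReal (c w x) ∂μ
      ≤ ∫⁻ x, ENNReal.ofReal B * (ENNReal.ofReal (c w z) + ENNReal.ofReal (c z x)) ∂μ :=
        lintegral_mono fun x => hc.ofReal_le_mul_add hrelaxed w x z
    _ = ENNReal.ofReal B * (ENNReal.ofReal (c w z) + ∫⁻ x, ENNReal.ofReal (c z x) ∂μ) := by
        rw [lintegral_const_mul' _ _ ENNReal.ofReal_ne_top, lintegral_add_left measurable_const,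
          lintegral_const, measure_univ, mul_one]
    _ < ⊤ := by finiteness

/-- The mean displacement of points under `K`, relative to the weight `1 + c z x`: the least `r`
such that `∫ c(x,y) K(x,dy) ≤ r (1 + c z x)` for all `x`. -/
noncomputable def relDisplacement (c : X → X → ℝ) (z : X) (K : X → Measure X) : ℝ≥0∞ :=
  ⨆ x, (∫⁻ y, ENNReal.ofReal (c x y) ∂(K x)) / weight c z x

theorem relDisplacement_le_iff {r : ℝ≥0∞} :
    relDisplacement c z K ≤ r ↔
      ∀ x, ∫⁻ y, ENNReal.ofReal (c x y) ∂(K x) ≤ r * weight c z x :=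
  iSup_le_iff.trans <| forall_congr' fun x =>
    ENNReal.div_le_iff (one_pos.trans_le (one_le_weight c z x)).ne' (weight_ne_top c z x)

theorem lintegral_le_relDisplacement_mul (c : X → X → ℝ) (z : X) (K : X → Measure X) (x : X) :
    ∫⁻ y, ENNReal.ofReal (c x y) ∂(K x) ≤ relDisplacement c z K * weight c z x :=
  relDisplacement_le_iff.1 le_rfl x

theorem relDisplacement_dirac (hzero : ∀ x, c x x = 0) :
    relDisplacement c z Measure.dirac = 0 := by
  refine nonpos_iff_eq_zero.1 (relDisplacement_le_iff.2 fun x => ?_)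
  refine (lintegral_dirac_le x _).trans ?_
  simp only [hzero, ENNReal.ofReal_zero, zero_le]

theorem IsSemimetric.relDisplacement_le_ofReal (hc : IsSemimetric c) {r α β : ℝ} (hα : 0 ≤ α)
    (hβ : 0 ≤ β)
    (hbound : ∀ x, ∫⁻ y, ENNReal.ofReal (c x y) ∂(K x) ≤
      ENNReal.ofReal (r * (α + β * c z x))) :
    relDisplacement c z K ≤ ENNReal.ofReal (r * (α + β)) := by
  refine relDisplacement_le_iff.2 fun x => (hbound x).trans ?_
  have hcx : 0 ≤ c z x := hc.nonneg z x
  have hle : α + β * c z x ≤ (α + β) * (1 + c z x) := by nlinarith [mul_nonneg hα hcx]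
  calc ENNReal.ofReal (r * (α + β * c z x))
      = ENNReal.ofReal r * ENNReal.ofReal (α + β * c z x) := ENNReal.ofReal_mul' (by positivity)
    _ ≤ ENNReal.ofReal r * ENNReal.ofReal ((α + β) * (1 + c z x)) := by gcongr
    _ = ENNReal.ofReal (r * (α + β)) * weight c z x := by
        rw [weight, ← ENNReal.ofReal_one, ← ENNReal.ofReal_add zero_le_one hcx,
          ENNReal.ofReal_mul (by positivity), ENNReal.ofReal_mul' (by positivity), mul_assoc]

theorem IsSemimetric.tendsto_relDisplacement (hc : IsSemimetric c) {ι : Type*} {l : Filter ι}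
    {K : ι → X → Measure X} {ρ : ι → ℝ} {α β : ℝ} (hα : 0 ≤ α) (hβ : 0 ≤ β)
    (hρ : Tendsto ρ l (𝓝 0))
    (hbound : ∀ᶠ i in l, ∀ x, ∫⁻ y, ENNReal.ofReal (c x y) ∂(K i x) ≤
      ENNReal.ofReal (ρ i * (α + β * c z x))) :
    Tendsto (fun i => relDisplacement c z (K i)) l (𝓝 0) := by
  have hupper : Tendsto (fun i => ENNReal.ofReal (ρ i * (α + β))) l (𝓝 0) := by
    simpa only [zero_mul, ENNReal.ofReal_zero] using
      ENNReal.tendsto_ofReal (hρ.mul_const (α + β))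
  exact tendsto_of_tendsto_of_tendsto_of_le_of_le' tendsto_const_nhds hupper
    (.of_forall fun _ => zero_le)
    (hbound.mono fun _ => hc.relDisplacement_le_ofReal hα hβ)

theorem cost_bind_le_relDisplacement_mul (c : X → X → ℝ) (z : X) (μ : Measure X)
    [IsProbabilityMeasure μ] (hK : Measurable K) (hprob : ∀ x, IsProbabilityMeasure (K x)) :
    cost c μ (μ.bind K) ≤ relDisplacement c z K * weightedMass c z μ :=
  calc cost c μ (μ.bind K)
      ≤ ∫⁻ x, ∫⁻ y, ENNReal.ofReal (c x y) ∂(K x) ∂μ := cost_bind_le_lintegral μ hK hprob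
    _ ≤ ∫⁻ x, relDisplacement c z K * weight c z x ∂μ :=
        lintegral_mono (lintegral_le_relDisplacement_mul c z K)
    _ ≤ relDisplacement c z K * weightedMass c z μ := lintegral_mul_weight_le c z μ _

theorem IsSemimetric.weightedMass_bind_le (hc : IsSemimetric c) (hB : 1 ≤ B)
    (hrelaxed : ∀ x y w, c x y ≤ B * (c x w + c w y)) (z : X) (μ : Measure X)
    (hprob : ∀ x, IsProbabilityMeasure (K x)) :
    weightedMass c z (μ.bind K) ≤
      ENNReal.ofReal B * (1 + relDisplacement c z K) * weightedMass c z μ := by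
  refine (Measure.lintegral_bind_le _ _ _).trans (le_trans ?_ (lintegral_mul_weight_le c z μ _))
  refine lintegral_mono fun x => ?_
  calc ∫⁻ y, weight c z y ∂(K x)
      ≤ ∫⁻ y, ENNReal.ofReal B * (weight c z x + ENNReal.ofReal (c x y)) ∂(K x) :=
        lintegral_mono (hc.weight_le hB hrelaxed z x)
    _ = ENNReal.ofReal B * (weight c z x + ∫⁻ y, ENNReal.ofReal (c x y) ∂(K x)) := by
        rw [lintegral_const_mul' _ _ ENNReal.ofReal_ne_top, lintegral_add_left measurable_const,
          lintegral_const, measure_univ, mul_one]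
    _ ≤ ENNReal.ofReal B * (weight c z x + relDisplacement c z K * weight c z x) := by
        grw [lintegral_le_relDisplacement_mul c z K x]
    _ = ENNReal.ofReal B * (1 + relDisplacement c z K) * weight c z x := by ring

end Weight

section Semigroup

variable {X : Type*} [MeasurableSpace X]

/-- A semigroup of probability kernels on a measurable space, indexed by the times `t ≥ 0`;
nothing is required of `κ t` for `t < 0`. -/
structure IsMarkovSemigroup (κ : ℝ → X → Measure X) : Prop where
  measurable : ∀ {t : ℝ}, 0 ≤ t → Measurable (κ t)
  isProbabilityMeasure : ∀ {t : ℝ}, 0 ≤ t → ∀ x, IsProbabilityMeasure (κ t x)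
  zero : κ 0 = Measure.dirac
  add : ∀ {t s : ℝ}, 0 ≤ t → 0 ≤ s → ∀ x, κ (t + s) x = (κ t x).bind (κ s)

variable {c : X → X → ℝ} {B : ℝ} {κ : ℝ → X → Measure X} {z : X} {μ : Measure X}

theorem FellerSG.isMarkovSemigroup (hκ : FellerSG c κ) : IsMarkovSemigroup κ where
  measurable ht := (hκ.kernel _ ht).1
  isProbabilityMeasure ht := (hκ.kernel _ ht).2.1
  zero := funext hκ.init
  add ht hs := hκ.chapman _ ht _ hs

namespace IsMarkovSemigroup

theorem isProbabilityMeasure_bind (hκ : IsMarkovSemigroup κ) (μ : Measure X)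
    [IsProbabilityMeasure μ] {t : ℝ} (ht : 0 ≤ t) : IsProbabilityMeasure (μ.bind (κ t)) :=
  MeasureTheory.isProbabilityMeasure_bind (hκ.measurable ht).aemeasurable
    (.of_forall (hκ.isProbabilityMeasure ht))

theorem bind_zero (hκ : IsMarkovSemigroup κ) (μ : Measure X) : μ.bind (κ 0) = μ := by
  rw [hκ.zero, Measure.bind_dirac]

theorem bind_add (hκ : IsMarkovSemigroup κ) (μ : Measure X) {t s : ℝ} (ht : 0 ≤ t)
    (hs : 0 ≤ s) : μ.bind (κ (t + s)) = (μ.bind (κ t)).bind (κ s) := by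
  rw [Measure.bind_bind (hκ.measurable ht).aemeasurable (hκ.measurable hs).aemeasurable,
    funext (hκ.add ht hs)]

theorem weightedMass_bind_nat_mul_le (hκ : IsMarkovSemigroup κ) (hc : IsSemimetric c)
    (hB : 1 ≤ B) (hrelaxed : ∀ x y w, c x y ≤ B * (c x w + c w y)) (z : X) (μ : Measure X)
    {h : ℝ} (hh : 0 ≤ h) (n : ℕ) :
    weightedMass c z (μ.bind (κ (n * h))) ≤
      (ENNReal.ofReal B * (1 + relDisplacement c z (κ h))) ^ n * weightedMass c z μ := by
  induction n with
  | zero => simp only [Nat.cast_zero, zero_mul, hκ.bind_zero, pow_zero, one_mul, le_refl]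
  | succ n ih =>
    rw [Nat.cast_succ, add_one_mul, hκ.bind_add μ (by positivity) hh, pow_succ', mul_assoc]
    grw [hc.weightedMass_bind_le hB hrelaxed z _ (hκ.isProbabilityMeasure hh), ih]

theorem exists_forall_weightedMass_bind_le (hκ : IsMarkovSemigroup κ) (hc : IsSemimetric c)
    (hB : 1 ≤ B) (hrelaxed : ∀ x y w, c x y ≤ B * (c x w + c w y)) {C : ℝ≥0∞} (hC : C ≠ ⊤)
    (hsmall : ∀ᶠ h in 𝓝[≥] (0 : ℝ), relDisplacement c z (κ h) ≤ C)
    (hμ : weightedMass c z μ ≠ ⊤) (t : ℝ) :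
    ∃ M ≠ ⊤, ∀ r ∈ Set.Icc 0 t, weightedMass c z (μ.bind (κ r)) ≤ M := by
  obtain ⟨δ, hδ : 0 < δ, hδC⟩ := mem_nhdsGE_iff_exists_Ico_subset.1 hsmall
  obtain ⟨n, hn⟩ := exists_nat_gt (t / δ)
  refine ⟨(ENNReal.ofReal B * (1 + C)) ^ n * weightedMass c z μ, by finiteness, fun r hr => ?_⟩
  have hn0 : (0 : ℝ) < n := (div_nonneg (hr.1.trans hr.2) hδ.le).trans_lt hn
  have hstep : r / n < δ := by
    rw [div_lt_iff₀ hn0, mul_comm]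
    exact hr.2.trans_lt ((div_lt_iff₀ hδ).1 hn)
  have hstep0 : 0 ≤ r / n := div_nonneg hr.1 hn0.le
  have hmass := hκ.weightedMass_bind_nat_mul_le hc hB hrelaxed z μ hstep0 n
  rw [mul_div_cancel₀ r hn0.ne'] at hmass
  have hle : relDisplacement c z (κ (r / n)) ≤ C := hδC ⟨hstep0, hstep⟩
  grw [hmass, hle]

theorem cost_bind_bind_le (hκ : IsMarkovSemigroup κ) (hsymm : ∀ x y, c x y = c y x) (z : X)
    (μ : Measure X) [IsProbabilityMeasure μ] {s t : ℝ} (hs : 0 ≤ s) (ht : 0 ≤ t) :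
    cost c (μ.bind (κ s)) (μ.bind (κ t)) ≤
      relDisplacement c z (κ |s - t|) * weightedMass c z (μ.bind (κ (min s t))) := by
  wlog hst : s ≤ t generalizing s t
  · rw [cost_comm hsymm, abs_sub_comm, min_comm]
    exact this ht hs (le_of_not_ge hst)
  have hts : 0 ≤ t - s := sub_nonneg.2 hst
  have := hκ.isProbabilityMeasure_bind μ hs
  have hcost := cost_bind_le_relDisplacement_mul c z (μ.bind (κ s)) (hκ.measurable hts)
    (hκ.isProbabilityMeasure hts)
  rw [← hκ.bind_add μ hs hts, add_sub_cancel] at hcost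
  rwa [min_eq_left hst, abs_sub_comm, abs_of_nonneg hts]

theorem tendsto_relDisplacement_nhdsGE (hκ : IsMarkovSemigroup κ) (hzero : ∀ x, c x x = 0)
    (hlim : Tendsto (fun t => relDisplacement c z (κ t)) (𝓝[>] 0) (𝓝 0)) :
    Tendsto (fun t => relDisplacement c z (κ t)) (𝓝[≥] 0) (𝓝 0) := by
  have hκ0 : relDisplacement c z (κ 0) = 0 := by rw [hκ.zero, relDisplacement_dirac hzero]
  have hcont := continuousWithinAt_Ioi_iff_Ici (f := fun t => relDisplacement c z (κ t)) (a := 0)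
  simp only [ContinuousWithinAt, hκ0] at hcont
  exact hcont.1 hlim

theorem tendsto_cost_bind (hκ : IsMarkovSemigroup κ) (hsymm : ∀ x y, c x y = c y x)
    [IsProbabilityMeasure μ]
    (hlim : Tendsto (fun t => relDisplacement c z (κ t)) (𝓝[≥] 0) (𝓝 0)) {t : ℝ} (ht : 0 ≤ t)
    {M : ℝ≥0∞} (hM : M ≠ ⊤) (hmass : ∀ r ∈ Set.Icc 0 t, weightedMass c z (μ.bind (κ r)) ≤ M) :
    Tendsto (fun s => cost c (μ.bind (κ s)) (μ.bind (κ t))) (𝓝[Set.Ici 0] t) (𝓝 0) := by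
  have hdist : Tendsto (fun s => |s - t|) (𝓝[Set.Ici 0] t) (𝓝[≥] 0) := by
    refine tendsto_nhdsWithin_iff.2 ⟨?_, .of_forall fun s => abs_nonneg (s - t)⟩
    have hcont : ContinuousWithinAt (fun s => |s - t|) (Set.Ici 0) t := by fun_prop
    simpa only [ContinuousWithinAt, sub_self, abs_zero] using hcont
  have hupper : Tendsto (fun s => relDisplacement c z (κ |s - t|) * M) (𝓝[Set.Ici 0] t)
      (𝓝 0) := by
    simpa only [Function.comp_def, zero_mul] using
      ENNReal.Tendsto.mul_const (hlim.comp hdist) (.inr hM)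
  refine tendsto_of_tendsto_of_tendsto_of_le_of_le' tendsto_const_nhds hupper
    (.of_forall fun _ => zero_le) (eventually_nhdsWithin_of_forall fun s hs => ?_)
  grw [hκ.cost_bind_bind_le hsymm z μ hs ht,
    hmass (min s t) ⟨le_min hs ht, min_le_right s t⟩]

end IsMarkovSemigroup

end Semigroup

theorem statement8_general {X : Type*} [MeasurableSpace X] {c : X → X → ℝ} {B : ℝ}
    (hc : IsSemimetric c) (hB : 1 ≤ B) (hrelaxed : ∀ x y w, c x y ≤ B * (c x w + c w y))
    {κ : ℝ → X → Measure X} (hκ : IsMarkovSemigroup κ) {z : X}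
    (hlim : Tendsto (fun t => relDisplacement c z (κ t)) (𝓝[>] 0) (𝓝 0)) :
    CContSG c κ := by
  intro μ hμ
  have := hμ.1
  have hlim0 := hκ.tendsto_relDisplacement_nhdsGE (fun x => (hc.eq_zero_iff x x).2 rfl) hlim
  have hbdd := hκ.exists_forall_weightedMass_bind_le hc hB hrelaxed ENNReal.one_ne_top
    (hlim0.eventually_le_const one_pos) ((hc.memPc_iff_weightedMass_ne_top hrelaxed).1 hμ)
  constructor
  · intro t ht
    obtain ⟨M, hM, hmass⟩ := hbdd t
    have := hκ.isProbabilityMeasure_bind μ ht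
    exact (hc.memPc_iff_weightedMass_ne_top hrelaxed).2
      (ne_top_of_le_ne_top hM (hmass t ⟨ht, le_rfl⟩))
  · intro t ht
    obtain ⟨M, hM, hmass⟩ := hbdd t
    exact hκ.tendsto_cost_bind hc.symm hlim0 ht hM hmass

/-- A Feller semigroup satisfying the moment bound
`∫ c(x,y) κ_t(x,dy) ≤ ρ(t)[α + β c(z,x)]` is `c`-continuous. -/
theorem statement8 {X : Type*} [MeasurableSpace X] {c : X → X → ℝ} {B : ℝ}
    (hC : HypC c B) (κ : ℝ → X → Measure X) (hκ : FellerSG c κ)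
    (z : X) (α β : ℝ) (hα : 0 ≤ α) (hβ : 0 ≤ β)
    (ρ : ℝ → ℝ) (hρnonneg : ∀ t : ℝ, 0 ≤ t → 0 ≤ ρ t)
    (hρcont : ContinuousOn ρ (Set.Ici (0 : ℝ)))
    (hρlim : Filter.Tendsto ρ (nhdsWithin (0 : ℝ) (Set.Ioi (0 : ℝ))) (nhds 0))
    (hbound : ∀ t : ℝ, 0 ≤ t → ∀ x : X,
      (∫⁻ y, ENNReal.ofReal (c x y) ∂(κ t x)) ≤ ENNReal.ofReal (ρ t * (α + β * c z x))) :
    CContSG c κ :=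
  statement8_general hC.semimetric hC.one_le hC.relaxed hκ.isMarkovSemigroup
    (hC.semimetric.tendsto_relDisplacement hα hβ hρlim
      (eventually_nhdsWithin_of_forall fun t ht => hbound t (le_of_lt ht)))

end PoC
end

section
/- Let (Π,c) be a semimetric space satisfying Hypothesis (C), let N ∈ ℕ with N ≥ 2, and let Ξ : Π × P_c(Π) × P_c(Π) → [0,∞) satisfy: (i) Ξ(x,μ,ν) = Ξ(x,ν,μ) and Ξ(x,μ,μ) = 0 for all x, μ, ν; (ii) there exists B' > 1 such that Ξ(x,μ,ν) ≤ B'[c(x,y) + C_c(μ,μ̃) + Ξ(y,μ̃,ν)] for all x,y ∈ Π and μ,ν,μ̃ ∈ P_c(Π); (iii) (x,μ,ν) ↦ Ξ(x,μ,ν) is continuous with respect to the product of the c-topology on Π and the C_c-topologies on P_c(Π). Fix ρ ∈ P_c(Π) and z ∈ Π^N, and define F₁ : Π^N → [0,∞) by F₁(x) = Ξ(x₁, (1/(N−1)) Σ_{k=2}^N δ_{x_k}, ρ). Then there exist constants M₀, M₁ ≥ 0 such that F₁(x) ≤ M₀ + M₁ c_N(z,x) for all x ∈ Π^N, where c_N(z,x)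 = (1/N) Σ_{k=1}^N c(z_k,x_k); in particular F₁ ∈ C_{b,c_N}(Π^N). -/
open MeasureTheory Filter Topology ENNReal

/-!
Matching atoms of equal index couples the empirical measures of two configurations `x` and `y`, so
the transport cost between the empirical measures of the particles other than the first is at most
the sum of `c (x k) (y k)` over these `k`. Adding the first particle gives at most `N * c_N(x, y)`.
Hence the relaxed triangle inequality for `Ξ`, applied between `x` and the reference configuration
`z`, bounds `F₁` with `M₀ = B' * F₁ z` and `M₁ = B' * N`; and `c_N`-convergence of configurations
forces convergence of both the first particle and the empirical measure of the others, so that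
`F₁` inherits the continuity of `Ξ`.
-/

namespace PoC

section TransportCost

variable {X Ω : Type*} [MeasurableSpace X] [MeasurableSpace Ω]

lemma cost_map_map_le (c : X → X → ℝ) (P : Measure Ω) [IsProbabilityMeasure P] {f g : Ω → X}
    (hf : Measurable f) (hg : Measurable g) :
    cost c (P.map f) (P.map g) ≤ ∫⁻ ω, ENNReal.ofReal (c (f ω) (g ω)) ∂P := by
  have hcoupling : IsCoupling (P.map f) (P.map g) (P.map fun ω => (f ω, g ω)) :=
    ⟨Measure.isProbabilityMeasure_map (hf.prodMk hg).aemeasurable,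
      Measure.fst_map_prodMk hg, Measure.snd_map_prodMk hf⟩
  exact (iInf₂_le _ hcoupling).trans (lintegral_map_le _ _)

lemma cost_self {c : X → X → ℝ} (hc : ∀ x, c x x = 0) (μ : Measure X) [IsProbabilityMeasure μ] :
    cost c μ μ = 0 := by
  simpa [hc] using cost_map_map_le c μ measurable_id measurable_id

end TransportCost

section EmpiricalMeasure

variable {X Y ι : Type*} [MeasurableSpace X] [MeasurableSpace Y]

/-- The empirical measure of the points `x k`, `k ∈ S`, each weighted by `1 / #S`. For `S = ∅` it
is the zero measure. -/
noncomputable def empiricalMeasure (S : Finset ι) (x : ι → X) : Measure X :=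
  (S.card : ℝ≥0∞)⁻¹ • ∑ k ∈ S, Measure.dirac (x k)

lemma isProbabilityMeasure_empiricalMeasure {S : Finset ι} (hS : S.Nonempty) (x : ι → X) :
    IsProbabilityMeasure (empiricalMeasure S x) :=
  ⟨by simp [empiricalMeasure, ENNReal.inv_mul_cancel, hS.ne_empty]⟩

lemma map_empiricalMeasure {f : X → Y} (hf : Measurable f) (S : Finset ι) (x : ι → X) :
    (empiricalMeasure S x).map f = empiricalMeasure S fun k => f (x k) := by
  simp only [empiricalMeasure, Measure.map_smul, Measure.map_finset_sum hf.aemeasurable,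
    Measure.map_dirac' hf]

lemma lintegral_empiricalMeasure_le (S : Finset ι) (x : ι → X) (f : X → ℝ≥0∞) :
    ∫⁻ y, f y ∂empiricalMeasure S x ≤ (S.card : ℝ≥0∞)⁻¹ * ∑ k ∈ S, f (x k) := by
  -- `f` need not be measurable: its integral is a supremum over measurable minorants, for each of
  -- which equality holds.
  rw [← iSup_lintegral_measurable_le_eq_lintegral]
  refine iSup₂_le fun g hg => iSup_le fun hgf => ?_
  simp only [empiricalMeasure, lintegral_smul_measure, lintegral_finsetSum_measure,
    lintegral_dirac' _ hg, smul_eq_mul]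
  gcongr
  exact hgf _

lemma memPc_empiricalMeasure (c : X → X → ℝ) {S : Finset ι} (hS : S.Nonempty) (x : ι → X) :
    MemPc c (empiricalMeasure S x) := by
  refine ⟨isProbabilityMeasure_empiricalMeasure hS x, fun z => ?_⟩
  have hweight : (S.card : ℝ≥0∞)⁻¹ < ⊤ := by simpa using hS
  exact (lintegral_empiricalMeasure_le S x _).trans_lt <|
    ENNReal.mul_lt_top hweight <| ENNReal.sum_lt_top.2 fun _ _ => ENNReal.ofReal_lt_top

lemma cost_empiricalMeasure_le (c : X → X → ℝ) {S : Finset ι} (hS : S.Nonempty) (x y : ι → X) :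
    cost c (empiricalMeasure S x) (empiricalMeasure S y) ≤
      (S.card : ℝ≥0∞)⁻¹ * ∑ k ∈ S, ENNReal.ofReal (c (x k) (y k)) := by
  have := isProbabilityMeasure_empiricalMeasure hS fun k => (x k, y k)
  calc cost c (empiricalMeasure S x) (empiricalMeasure S y)
      = cost c ((empiricalMeasure S fun k => (x k, y k)).map Prod.fst)
          ((empiricalMeasure S fun k => (x k, y k)).map Prod.snd) := by
        rw [map_empiricalMeasure measurable_fst, map_empiricalMeasure measurable_snd]
    _ ≤ ∫⁻ p, ENNReal.ofReal (c p.1 p.2) ∂empiricalMeasure S fun k => (x k, y k) :=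
        cost_map_map_le c _ measurable_fst measurable_snd
    _ ≤ (S.card : ℝ≥0∞)⁻¹ * ∑ k ∈ S, ENNReal.ofReal (c (x k) (y k)) :=
        lintegral_empiricalMeasure_le S _ _

lemma cost_empiricalMeasure_le_ofReal_sum {c : X → X → ℝ} (hc : ∀ x y, 0 ≤ c x y)
    {S : Finset ι} (hS : S.Nonempty) (x y : ι → X) :
    cost c (empiricalMeasure S x) (empiricalMeasure S y) ≤
      ENNReal.ofReal (∑ k ∈ S, c (x k) (y k)) := by
  have hweight : (S.card : ℝ≥0∞)⁻¹ ≤ 1 := by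
    simpa [ENNReal.inv_le_one, Nat.one_le_iff_ne_zero] using hS.ne_empty
  rw [ENNReal.ofReal_sum_of_nonneg fun k _ => hc _ _]
  exact (cost_empiricalMeasure_le c hS x y).trans (mul_le_of_le_one_left' hweight)

end EmpiricalMeasure

section Tensorization

variable {X ι : Type*} [Fintype ι]

/-- The tensorized semimetric `c_N` on `ι → X`, where `N` is the cardinality of `ι`. -/
noncomputable def tensorized (c : X → X → ℝ) (x y : ι → X) : ℝ :=
  (Fintype.card ι : ℝ)⁻¹ * ∑ k, c (x k) (y k)

lemma card_mul_tensorized [Nonempty ι] (c : X → X → ℝ) (x y : ι → X) :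
    Fintype.card ι * tensorized c x y = ∑ k, c (x k) (y k) :=
  mul_inv_cancel_left₀ (Nat.cast_ne_zero.2 Fintype.card_ne_zero) _

lemma tensorized_comm {c : X → X → ℝ} (hc : ∀ x y, c x y = c y x) (x y : ι → X) :
    tensorized c x y = tensorized c y x := by
  simp only [tensorized, hc (x _)]

lemma CConv.tendsto_sum [Nonempty ι] {c : X → X → ℝ} {u : ℕ → ι → X} {l : ι → X}
    (hu : CConv (tensorized c) u l) :
    Tendsto (fun n => ∑ k, c (u n k) (l k)) atTop (𝓝 0) := by
  simpa [card_mul_tensorized] using Tendsto.const_mul (Fintype.card ι : ℝ) hu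

lemma CConv.apply {c : X → X → ℝ} (hc : ∀ x y, 0 ≤ c x y) {u : ℕ → ι → X} {l : ι → X}
    (hu : CConv (tensorized c) u l) (i : ι) : CConv c (fun n => u n i) (l i) :=
  have : Nonempty ι := ⟨i⟩
  squeeze_zero (fun _ => hc _ _)
    (fun n => Finset.single_le_sum (f := fun k => c (u n k) (l k)) (fun _ _ => hc _ _)
      (Finset.mem_univ i)) hu.tendsto_sum

lemma CConv.tendsto_cost_empiricalMeasure [MeasurableSpace X] {c : X → X → ℝ}
    (hc : ∀ x y, 0 ≤ c x y) {u : ℕ → ι → X} {l : ι → X} (hu : CConv (tensorized c) u l)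
    {S : Finset ι} (hS : S.Nonempty) :
    Tendsto (fun n => cost c (empiricalMeasure S (u n)) (empiricalMeasure S l)) atTop (𝓝 0) := by
  have : Nonempty ι := hS.to_type
  have hbound : Tendsto (fun n => ENNReal.ofReal (∑ k, c (u n k) (l k))) atTop (𝓝 0) := by
    simpa using ENNReal.tendsto_ofReal hu.tendsto_sum
  refine tendsto_of_tendsto_of_tendsto_of_le_of_le tendsto_const_nhds hbound
    (fun _ => zero_le) fun n => (cost_empiricalMeasure_le_ofReal_sum hc hS (u n) l).trans ?_
  exact ENNReal.ofReal_le_ofReal <|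
    Finset.sum_le_univ_sum_of_nonneg fun _ => hc _ _

end Tensorization

section ParticleAndOthers

variable {X ι : Type*} [MeasurableSpace X] [Fintype ι] [DecidableEq ι] [Nontrivial ι]
  {c : X → X → ℝ} {G : X → Measure X → ℝ}

lemma add_toReal_cost_empiricalMeasure_erase_le (hc : ∀ x y, 0 ≤ c x y) (i : ι) (x y : ι → X) :
    c (x i) (y i) + (cost c (empiricalMeasure (Finset.univ.erase i) x)
        (empiricalMeasure (Finset.univ.erase i) y)).toReal ≤
      Fintype.card ι * tensorized c x y := by
  rw [card_mul_tensorized, ← Finset.add_sum_erase _ _ (Finset.mem_univ i)]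
  gcongr
  exact ENNReal.toReal_le_of_le_ofReal (Finset.sum_nonneg fun _ _ => hc _ _)
    (cost_empiricalMeasure_le_ofReal_sum hc Finset.univ_nontrivial.erase_nonempty x y)

lemma apply_empiricalMeasure_erase_le (hc : ∀ x y, 0 ≤ c x y) {b : ℝ} (hb : 0 ≤ b)
    (hG : ∀ x y μ ν, MemPc c μ → MemPc c ν →
      G x μ ≤ b * (c x y + (cost c μ ν).toReal + G y ν)) (i : ι) (x z : ι → X) :
    G (x i) (empiricalMeasure (Finset.univ.erase i) x) ≤
      b * G (z i) (empiricalMeasure (Finset.univ.erase i) z) +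
        b * Fintype.card ι * tensorized c x z := by
  have hmem (y : ι → X) : MemPc c (empiricalMeasure (Finset.univ.erase i) y) :=
    memPc_empiricalMeasure c Finset.univ_nontrivial.erase_nonempty y
  calc G (x i) (empiricalMeasure (Finset.univ.erase i) x)
      ≤ b * (c (x i) (z i) + (cost c (empiricalMeasure (Finset.univ.erase i) x)
            (empiricalMeasure (Finset.univ.erase i) z)).toReal +
          G (z i) (empiricalMeasure (Finset.univ.erase i) z)) :=
        hG _ _ _ _ (hmem x) (hmem z)
    _ ≤ b * (Fintype.card ι * tensorized c x z +
          G (z i) (empiricalMeasure (Finset.univ.erase i) z)) := by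
        gcongr
        exact add_toReal_cost_empiricalMeasure_erase_le hc i x z
    _ = _ := by ring

lemma seqContinuous_apply_empiricalMeasure_erase (hc : ∀ x y, 0 ≤ c x y)
    (hG : ∀ (u : ℕ → X) (x : X) (μs : ℕ → Measure X) (μ : Measure X),
      (∀ n, MemPc c (μs n)) → MemPc c μ → CConv c u x →
      Tendsto (fun n => cost c (μs n) μ) atTop (𝓝 0) →
      Tendsto (fun n => G (u n) (μs n)) atTop (𝓝 (G x μ))) (i : ι) :
    SeqContinuous (tensorized c)
      fun x : ι → X => G (x i) (empiricalMeasure (Finset.univ.erase i) x) := fun u l hu =>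
  have hS : (Finset.univ.erase i).Nonempty := Finset.univ_nontrivial.erase_nonempty
  hG _ _ _ _ (fun n => memPc_empiricalMeasure c hS (u n)) (memPc_empiricalMeasure c hS l)
    (hu.apply hc i) (hu.tendsto_cost_empiricalMeasure hc hS)

end ParticleAndOthers

theorem statement18_general {X ι : Type*} [MeasurableSpace X] [Fintype ι] [DecidableEq ι]
    [Nontrivial ι] {c : X → X → ℝ} (hc : IsSemimetric c) (Ξ : X → Measure X → Measure X → ℝ)
    (hΞnonneg : ∀ x μ ν, 0 ≤ Ξ x μ ν) {B' : ℝ} (hB' : 0 ≤ B')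
    (hΞtri : ∀ x y : X, ∀ μ ν μ' : Measure X, MemPc c μ → MemPc c ν → MemPc c μ' →
      Ξ x μ ν ≤ B' * (c x y + (cost c μ μ').toReal + Ξ y μ' ν))
    (hΞcont : ∀ (u : ℕ → X) (x : X) (μs νs : ℕ → Measure X) (μ ν : Measure X),
      (∀ n, MemPc c (μs n)) → (∀ n, MemPc c (νs n)) → MemPc c μ → MemPc c ν →
      CConv c u x →
      Tendsto (fun n => cost c (μs n) μ) atTop (𝓝 0) →
      Tendsto (fun n => cost c (νs n) ν) atTop (𝓝 0) →
      Tendsto (fun n => Ξ (u n) (μs n) (νs n)) atTop (𝓝 (Ξ x μ ν)))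
    (ρ : Measure X) (hρ : MemPc c ρ) (i : ι) (z : ι → X) :
    (∃ M₀ M₁ : ℝ, 0 ≤ M₀ ∧ 0 ≤ M₁ ∧ ∀ x : ι → X,
      Ξ (x i) (empiricalMeasure (Finset.univ.erase i) x) ρ ≤ M₀ + M₁ * tensorized c z x) ∧
    SeqContinuous (tensorized c)
      fun x : ι → X => Ξ (x i) (empiricalMeasure (Finset.univ.erase i) x) ρ := by
  refine ⟨⟨B' * Ξ (z i) (empiricalMeasure (Finset.univ.erase i) z) ρ, B' * Fintype.card ι,
    mul_nonneg hB' (hΞnonneg _ _ _), by positivity, fun x => ?_⟩, ?_⟩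
  · rw [tensorized_comm hc.symm]
    exact apply_empiricalMeasure_erase_le (G := fun x μ => Ξ x μ ρ) hc.nonneg hB'
      (fun x y μ ν hμ hν => hΞtri x y μ ρ ν hμ hρ hν) i x z
  · have := hρ.1
    have hcostρ : cost c ρ ρ = 0 := cost_self (fun x => (hc.eq_zero_iff x x).2 rfl) ρ
    exact seqContinuous_apply_empiricalMeasure_erase (G := fun x μ => Ξ x μ ρ) hc.nonneg
      (fun u x μs μ hμs hμ hu hcost =>
        hΞcont u x μs (fun _ => ρ) μ ρ hμs (fun _ => hρ) hμ hρ hu hcost (by simp [hcostρ])) i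

/-- For `Ξ` as in Hypothesis (A, Ξ), `ρ ∈ P_c(X)` and `z ∈ X^N`,
the function `F₁(x) = Ξ(x₁, (1/(N-1)) Σ_{k≥2} δ_{x_k}, ρ)` satisfies
`F₁(x) ≤ M₀ + M₁ c_N(z,x)`; in particular `F₁ ∈ C_{b,c_N}(X^N)`. -/
theorem statement18 {X : Type*} [MeasurableSpace X] {c : X → X → ℝ} {B : ℝ}
    (hC : HypC c B) {N : ℕ} (hN : 2 ≤ N)
    (Ξ : X → Measure X → Measure X → ℝ)
    (hΞnonneg : ∀ x μ ν, 0 ≤ Ξ x μ ν)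
    -- (i) symmetry and vanishing on the diagonal:
    (hΞsymm : ∀ x : X, ∀ μ ν : Measure X, MemPc c μ → MemPc c ν → Ξ x μ ν = Ξ x ν μ)
    (hΞdiag : ∀ x : X, ∀ μ : Measure X, MemPc c μ → Ξ x μ μ = 0)
    -- (ii) the relaxed triangle-type inequality with constant `B' > 1`:
    (B' : ℝ) (hB' : 1 < B')
    (hΞtri : ∀ x y : X, ∀ μ ν μ' : Measure X, MemPc c μ → MemPc c ν → MemPc c μ' →
      Ξ x μ ν ≤ B' * (c x y + (cost c μ μ').toReal + Ξ y μ' ν))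
    -- (iii) continuity w.r.t. the product of the `c`- and `C_c`-topologies:
    (hΞcont : ∀ (u : ℕ → X) (x : X) (μs νs : ℕ → Measure X) (μ ν : Measure X),
      (∀ n, MemPc c (μs n)) → (∀ n, MemPc c (νs n)) → MemPc c μ → MemPc c ν →
      CConv c u x →
      Filter.Tendsto (fun n => cost c (μs n) μ) Filter.atTop (nhds 0) →
      Filter.Tendsto (fun n => cost c (νs n) ν) Filter.atTop (nhds 0) →
      Filter.Tendsto (fun n => Ξ (u n) (μs n) (νs n)) Filter.atTop (nhds (Ξ x μ ν)))
    (ρ : Measure X) (hρ : MemPc c ρ) (z : Fin N → X) :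
    (∃ M₀ M₁ : ℝ, 0 ≤ M₀ ∧ 0 ≤ M₁ ∧
      ∀ x : Fin N → X,
        Ξ (x ⟨0, by omega⟩)
            (((N : ℝ≥0∞) - 1)⁻¹ •
              ∑ k ∈ Finset.univ.erase (⟨0, by omega⟩ : Fin N), Measure.dirac (x k)) ρ
          ≤ M₀ + M₁ * ((N : ℝ)⁻¹ * ∑ k : Fin N, c (z k) (x k))) ∧
    -- in particular `F₁` is `c_N`-sequentially continuous (membership in `C_{b,c_N}`):
    SeqContinuous (fun x y : Fin N → X => (N : ℝ)⁻¹ * ∑ k : Fin N, c (x k) (y k))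
      (fun x : Fin N → X =>
        Ξ (x ⟨0, by omega⟩)
          (((N : ℝ≥0∞) - 1)⁻¹ •
            ∑ k ∈ Finset.univ.erase (⟨0, by omega⟩ : Fin N), Measure.dirac (x k)) ρ) := by
  have := Fin.nontrivial_iff_two_le.2 hN
  simpa +unfoldPartialApp [empiricalMeasure, tensorized] using
    statement18_general hC.semimetric Ξ hΞnonneg (zero_le_one.trans hB'.le) hΞtri hΞcont
      ρ hρ ⟨0, by omega⟩ z

end PoC
end
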